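/- arXiv:1207.1211 — 2 statements merged into one kernel-verified Lean document; each statement's English description precedes it below -/
import Mathlib

section
/- Every finite subgroup of the special orthogonal group SO(3, ℝ) is isomorphic, as an abstract group, to one of: a cyclic group ℤ/nℤ for some n ≥ 1, a dihedral group of order 2n for some n ≥ 2, the alternating group A₄, the symmetric group S₄, or the alternating group A₅. -/
namespace SO3
section
open Matrix

lemma adj_eq {A : Matrix (Fin 3) (Fin 3) ℝ} (hA : A * Aᵀ = 1) (hd : A.det = 1) :
    A.adjugate = Aᵀ := by
  have h1 : A.adjugate * A = 1 := by rw [adjugate_mul, hd, one_smul]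
  calc A.adjugate = A.adjugate * (A * Aᵀ) := by rw [hA, mul_one]
    _ = Aᵀ := by rw [← mul_assoc, h1, one_mul]

lemma mulVec_cross {A : Matrix (Fin 3) (Fin 3) ℝ} (hA : A * Aᵀ = 1) (hd : A.det = 1)
    (u v : Fin 3 → ℝ) : A *ᵥ (u ⨯₃ v) = (A *ᵥ u) ⨯₃ (A *ᵥ v) := by
  have h := adj_eq hA hd
  rw [adjugate_fin_three] at h
  have e : ∀ i j, A j i = (Aᵀ) i j := fun i j => rfl
  have h00 := congrFun (congrFun h 0) 0
  have h01 := congrFun (congrFun h 0) 1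
  have h02 := congrFun (congrFun h 0) 2
  have h10 := congrFun (congrFun h 1) 0
  have h11 := congrFun (congrFun h 1) 1
  have h12 := congrFun (congrFun h 1) 2
  have h20 := congrFun (congrFun h 2) 0
  have h21 := congrFun (congrFun h 2) 1
  have h22 := congrFun (congrFun h 2) 2
  simp at h00 h01 h02 h10 h11 h12 h20 h21 h22
  rw [cross_apply, cross_apply]
  ext i
  fin_cases i
  · simp [mulVec, dotProduct, Fin.sum_univ_three]
    rw [← h00, ← h10, ← h20]; ring
  · simp [mulVec, dotProduct, Fin.sum_univ_three]
    rw [← h01, ← h11, ← h21]; ring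
  · simp [mulVec, dotProduct, Fin.sum_univ_three]
    rw [← h02, ← h12, ← h22]; ring

lemma mulVec_dot {A : Matrix (Fin 3) (Fin 3) ℝ} (hA : A * Aᵀ = 1)
    (u v : Fin 3 → ℝ) : (A *ᵥ u) ⬝ᵥ (A *ᵥ v) = u ⬝ᵥ v := by
  have hA' : Aᵀ * A = 1 := mul_eq_one_comm.mp hA
  rw [dotProduct_mulVec, ← mulVec_transpose, mulVec_mulVec, hA', one_mulVec]

lemma exists_fixed {A : Matrix (Fin 3) (Fin 3) ℝ} (hA : A * Aᵀ = 1) (hd : A.det = 1) :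
    ∃ v : Fin 3 → ℝ, v ⬝ᵥ v = 1 ∧ A *ᵥ v = v := by
  have h0 : (A - 1).det = 0 := by
    have h1 : (A - 1).det = (1 - A).det := by
      calc (A - 1).det = (A * (1 - Aᵀ)).det := by rw [mul_sub, hA, mul_one]
        _ = (1 - Aᵀ).det := by rw [det_mul, hd, one_mul]
        _ = ((1 - A)ᵀ).det := by simp
        _ = _ := det_transpose _
    have h2 : (1 - A).det = - (A - 1).det := by
      rw [← neg_sub, det_neg]; simp; ring
    linarith
  obtain ⟨v, hv, h⟩ := exists_mulVec_eq_zero_iff.mpr h0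
  rw [sub_mulVec, one_mulVec, sub_eq_zero] at h
  have hp : 0 < v ⬝ᵥ v := by
    have := dotProduct_star_self_pos_iff.mpr hv
    simpa using this
  refine ⟨(√(v ⬝ᵥ v))⁻¹ • v, ?_, ?_⟩
  · rw [smul_dotProduct, dotProduct_smul, smul_smul, smul_eq_mul, ← mul_inv,
      Real.mul_self_sqrt hp.le, inv_mul_cancel₀ hp.ne']
  · rw [mulVec_smul, h]

lemma fixed_unique {A : Matrix (Fin 3) (Fin 3) ℝ} (hA : A * Aᵀ = 1) (hd : A.det = 1)
    (hne : A ≠ 1) {u v : Fin 3 → ℝ} (hu : u ⬝ᵥ u = 1) (hv : v ⬝ᵥ v = 1)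
    (fu : A *ᵥ u = u) (fv : A *ᵥ v = v) : v = u ∨ v = -u := by
  by_contra! hc
  apply hne
  have hw : A *ᵥ (u ⨯₃ v) = u ⨯₃ v := by rw [mulVec_cross hA hd, fu, fv]
  have hn : (u ⨯₃ v) ⬝ᵥ (u ⨯₃ v) ≠ 0 := by
    rw [cross_dot_cross, hu, hv, dotProduct_comm v u]
    intro h
    have : (u ⬝ᵥ v - 1) * (u ⬝ᵥ v + 1) = 0 := by linarith
    rcases mul_eq_zero.mp this with h | h
    · apply hc.1
      rw [← sub_eq_zero, ← dotProduct_self_eq_zero]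
      simp only [sub_dotProduct, dotProduct_sub, hu, hv, dotProduct_comm v u]; linarith
    · apply hc.2
      rw [← sub_eq_zero, ← dotProduct_self_eq_zero]
      simp only [sub_neg_eq_add, add_dotProduct, dotProduct_add, hu, hv, dotProduct_comm v u]
      linarith
  set M : Matrix (Fin 3) (Fin 3) ℝ := ![u ⨯₃ v, u, v] with hM
  have hdM : M.det ≠ 0 := by rw [hM, ← triple_product_eq_det]; exact hn
  have hMA : M * Aᵀ = M := by
    ext i j
    have : (M * Aᵀ) i j = (A *ᵥ (M i)) j := by
      simp [mul_apply, mulVec, dotProduct, mul_comm]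
    rw [this]
    fin_cases i
    · exact congrFun hw j
    · exact congrFun fu j
    · exact congrFun fv j
  have hU : IsUnit M := (isUnit_iff_isUnit_det M).mpr hdM.isUnit
  have : Aᵀ = 1 := hU.mul_left_cancel (by rw [hMA, mul_one])
  rw [← transpose_transpose A, this, transpose_one]

lemma exists_perp (p : Fin 3 → ℝ) : ∃ u : Fin 3 → ℝ, u ⬝ᵥ u = 1 ∧ p ⬝ᵥ u = 0 := by
  have : ∃ v : Fin 3 → ℝ, v ≠ 0 ∧ p ⬝ᵥ v = 0 := by
    by_cases h : p 0 = 0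
    · exact ⟨![1,0,0], fun h => by simpa using congrFun h 0, by simp [dotProduct, Fin.sum_univ_three, h]⟩
    · refine ⟨![p 1, - p 0, 0], fun h' => h (by simpa using congrFun h' 1), by
        simp [dotProduct, Fin.sum_univ_three]; ring⟩
  obtain ⟨v, hv, h⟩ := this
  have hp : 0 < v ⬝ᵥ v := by
    have := dotProduct_star_self_pos_iff.mpr hv
    simpa using this
  refine ⟨(√(v ⬝ᵥ v))⁻¹ • v, ?_, ?_⟩
  · rw [smul_dotProduct, dotProduct_smul, smul_smul, smul_eq_mul, ← mul_inv,
      Real.mul_self_sqrt hp.le, inv_mul_cancel₀ hp.ne']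
  · rw [dotProduct_smul, h, smul_zero]

/-- expansion in an orthonormal frame -/
lemma expand {p u : Fin 3 → ℝ} (hp : p ⬝ᵥ p = 1) (hu : u ⬝ᵥ u = 1) (hpu : p ⬝ᵥ u = 0)
    {x : Fin 3 → ℝ} (hx : p ⬝ᵥ x = 0) :
    x = (x ⬝ᵥ u) • u + (x ⬝ᵥ (p ⨯₃ u)) • (p ⨯₃ u) := by
  set w := p ⨯₃ u with hw
  have hpw : p ⬝ᵥ w = 0 := dot_self_cross p u
  have huw : u ⬝ᵥ w = 0 := dot_cross_self p u
  have hww : w ⬝ᵥ w = 1 := by rw [hw, cross_dot_cross, hp, hu, hpu]; ring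
  set M : Matrix (Fin 3) (Fin 3) ℝ := ![p, u, w] with hM
  have hdM : M.det ≠ 0 := by
    rw [hM, ← triple_product_eq_det, triple_product_permutation, triple_product_permutation, ← hw, hww]
    norm_num
  have hU : IsUnit M := (isUnit_iff_isUnit_det M).mpr hdM.isUnit
  apply mulVec_injective_of_isUnit hU
  ext i
  fin_cases i
  · change p ⬝ᵥ x = p ⬝ᵥ _
    simp [dotProduct_add, dotProduct_smul, hpu, hpw, hx]
  · change u ⬝ᵥ x = u ⬝ᵥ _
    simp [dotProduct_add, dotProduct_smul, hu, huw, dotProduct_comm]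
  · change w ⬝ᵥ x = w ⬝ᵥ _
    rw [dotProduct_add, dotProduct_smul, dotProduct_smul, hww, dotProduct_comm w u, huw]
    simp [dotProduct_comm]

/-- rotation number -/
noncomputable def rot (p u : Fin 3 → ℝ) (A : Matrix (Fin 3) (Fin 3) ℝ) : ℂ :=
  ⟨(A *ᵥ u) ⬝ᵥ u, (A *ᵥ u) ⬝ᵥ (p ⨯₃ u)⟩

lemma mulVec_frame {p u : Fin 3 → ℝ} (hp : p ⬝ᵥ p = 1) (hu : u ⬝ᵥ u = 1) (hpu : p ⬝ᵥ u = 0)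
    {A : Matrix (Fin 3) (Fin 3) ℝ} (hA : A * Aᵀ = 1) (fA : A *ᵥ p = p) :
    A *ᵥ u = (rot p u A).re • u + (rot p u A).im • (p ⨯₃ u) := by
  apply expand hp hu hpu
  rw [← fA, mulVec_dot hA, hpu]

lemma mulVec_frame' {p u : Fin 3 → ℝ} (hp : p ⬝ᵥ p = 1) (hu : u ⬝ᵥ u = 1) (hpu : p ⬝ᵥ u = 0)
    {A : Matrix (Fin 3) (Fin 3) ℝ} (hA : A * Aᵀ = 1) (hd : A.det = 1) (fA : A *ᵥ p = p) :
    A *ᵥ (p ⨯₃ u) = (rot p u A).re • (p ⨯₃ u) - (rot p u A).im • u := by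
  have h : p ⨯₃ (p ⨯₃ u) = -u := by
    rw [cross_cross_eq_smul_sub_smul', hpu, hp]; simp
  rw [mulVec_cross hA hd, fA, mulVec_frame hp hu hpu hA fA]
  simp only [map_add, map_smul, h]
  simp [sub_eq_add_neg]

lemma rot_mul {p u : Fin 3 → ℝ} (hp : p ⬝ᵥ p = 1) (hu : u ⬝ᵥ u = 1) (hpu : p ⬝ᵥ u = 0)
    {A B : Matrix (Fin 3) (Fin 3) ℝ} (hA : A * Aᵀ = 1) (hd : A.det = 1) (fA : A *ᵥ p = p)
    (hB : B * Bᵀ = 1) (fB : B *ᵥ p = p) :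
    rot p u (A * B) = rot p u A * rot p u B := by
  have huw : u ⬝ᵥ (p ⨯₃ u) = 0 := dot_cross_self p u
  have hwu : (p ⨯₃ u) ⬝ᵥ u = 0 := by rw [dotProduct_comm, huw]
  have hww : (p ⨯₃ u) ⬝ᵥ (p ⨯₃ u) = 1 := by rw [cross_dot_cross, hp, hu, hpu]; ring
  have e : (A * B) *ᵥ u = ((rot p u A).re * (rot p u B).re - (rot p u A).im * (rot p u B).im) • u
      + ((rot p u A).re * (rot p u B).im + (rot p u A).im * (rot p u B).re) • (p ⨯₃ u) := by
    rw [← mulVec_mulVec, mulVec_frame hp hu hpu hB fB, mulVec_add, mulVec_smul, mulVec_smul,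
      mulVec_frame hp hu hpu hA fA, mulVec_frame' hp hu hpu hA hd fA]
    module
  apply Complex.ext
  · rw [Complex.mul_re]
    conv_lhs => rw [rot]
    simp only [e, add_dotProduct, smul_dotProduct, hu, hwu, smul_eq_mul]; ring
  · rw [Complex.mul_im]
    conv_lhs => rw [rot]
    simp only [e, add_dotProduct, smul_dotProduct, huw, hww, smul_eq_mul]; ring

lemma rot_one {p u : Fin 3 → ℝ} (hu : u ⬝ᵥ u = 1) : rot p u 1 = 1 := by
  apply Complex.ext
  · simp [rot, hu]
  · simp only [rot, one_mulVec]; exact dot_cross_self p u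

lemma rot_inj {p u : Fin 3 → ℝ} (hp : p ⬝ᵥ p = 1) (hu : u ⬝ᵥ u = 1) (hpu : p ⬝ᵥ u = 0)
    {A : Matrix (Fin 3) (Fin 3) ℝ} (hA : A * Aᵀ = 1) (hd : A.det = 1) (fA : A *ᵥ p = p)
    (h : rot p u A = 1) : A = 1 := by
  by_contra hne
  have fu : A *ᵥ u = u := by
    rw [mulVec_frame hp hu hpu hA fA, h]; simp
  rcases fixed_unique hA hd hne hp hu fA fu with h | h
  · rw [h, hp] at hpu; norm_num at hpu
  · rw [h, dotProduct_neg, hp] at hpu; norm_num at hpu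

end
end SO3
namespace SO3
open MulAction

/-- An action in which every nontrivial element fixes exactly one antipodal pair of points. -/
structure PoleAct (G P : Type) [Group G] [MulAction G P] (neg : P → P) : Prop where
  fix : ∀ g : G, g ≠ 1 → ∃ p, ∀ x : P, g • x = x ↔ x = p ∨ x = neg p
  ne : ∀ p, neg p ≠ p
  nn : ∀ p, neg (neg p) = p
  sm : ∀ (g : G) (p : P), g • neg p = neg (g • p)
  nt : ∀ p : P, ∃ g : G, g ≠ 1 ∧ g • p = p
  cyc : ∀ p : P, IsCyclic (stabilizer G p)

section
variable {G P : Type} [Group G] [MulAction G P] {neg : P → P}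

lemma PoleAct.two (h : PoleAct G P neg) {g : G} (hg : g ≠ 1) {x : P} (hx : g • x = x) (y : P) :
    g • y = y ↔ y = x ∨ y = neg x := by
  obtain ⟨p, hp⟩ := h.fix g hg
  rcases (hp x).mp hx with rfl | rfl
  · exact hp y
  · rw [hp y, h.nn]; exact or_comm

lemma PoleAct.ncard (h : PoleAct G P neg) {g : G} (hg : g ≠ 1) : (fixedBy P g).ncard = 2 := by
  obtain ⟨p, hp⟩ := h.fix g hg
  have : fixedBy P g = {p, neg p} := by
    ext x; simp [hp]
  rw [this, Set.ncard_pair (h.ne p).symm]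

lemma PoleAct.finite [Finite G] (h : PoleAct G P neg) : Finite P := by
  have : (Set.univ : Set P) ⊆ ⋃ g : {g : G // g ≠ 1}, fixedBy P g.1 := by
    intro p _
    obtain ⟨g, hg, hp⟩ := h.nt p
    exact Set.mem_iUnion.mpr ⟨⟨g, hg⟩, hp⟩
  have h2 : (⋃ g : {g : G // g ≠ 1}, fixedBy P g.1).Finite := by
    apply Set.finite_iUnion
    intro g
    apply Set.finite_of_ncard_ne_zero
    rw [h.ncard g.2]; norm_num
  exact Set.finite_univ_iff.mp (h2.subset this)

lemma PoleAct.one_of_fix (h : PoleAct G P neg) {g : G} {x y : P} (hx : g • x = x)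
    (hy : g • y = y) (h1 : y ≠ x) (h2 : y ≠ neg x) : g = 1 := by
  by_contra hg
  rcases (h.two hg hx y).mp hy with h | h <;> contradiction

lemma PoleAct.neg_fix (h : PoleAct G P neg) {g : G} {x : P} : g • neg x = neg x ↔ g • x = x := by
  rw [h.sm]
  constructor
  · intro e; rw [← h.nn (g • x), e, h.nn]
  · intro e; rw [e]

lemma PoleAct.sq (h : PoleAct G P neg) {g : G} {x : P} (hx : g • x = neg x) : g * g = 1 := by
  by_cases hg : g = 1
  · simp [hg]
  obtain ⟨p, hp⟩ := h.fix g hg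
  have hxx : (g * g) • x = x := by rw [mul_smul, hx, h.sm, hx, h.nn]
  have hpp : g • p = p := (hp p).mpr (Or.inl rfl)
  have hpp2 : (g * g) • p = p := by rw [mul_smul, hpp, hpp]
  refine h.one_of_fix hxx hpp2 ?_ ?_
  · rintro rfl; rw [hpp] at hx; exact h.ne _ hx.symm
  · rintro rfl; rw [h.neg_fix, hx] at hpp; exact h.ne _ hpp

lemma card_orbit_stab [Finite G] (x : P) :
    (orbit G x).ncard * Nat.card (stabilizer G x) = Nat.card G := by
  rw [← index_stabilizer, mul_comm]
  exact Subgroup.card_mul_index _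

lemma PoleAct.two_le [Finite G] (h : PoleAct G P neg) (x : P) :
    2 ≤ Nat.card (stabilizer G x) := by
  obtain ⟨g, hg, hx⟩ := h.nt x
  have : Nontrivial (stabilizer G x) := ⟨⟨⟨g, hx⟩, 1, fun e => hg (congrArg Subtype.val e)⟩⟩
  exact Finite.one_lt_card

/-- Burnside counting -/
lemma PoleAct.burnside [Finite G] (h : PoleAct G P neg) (Ω : Type) [Fintype Ω]
    (e : Ω ≃ orbitRel.Quotient G P) :
    ∑ i, (orbit G (e i).out).ncard + 2 * (Nat.card G - 1) = Fintype.card Ω * Nat.card G := by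
  classical
  have := h.finite
  have := Fintype.ofFinite G
  have := Fintype.ofFinite P
  have hb := sum_card_fixedBy_eq_card_orbits_mul_card_group G P
  have h1 : Fintype.card (Quotient (orbitRel G P)) = Fintype.card Ω :=
    (Fintype.card_congr e).symm
  have h2 : Fintype.card P = ∑ i, (orbit G (e i).out).ncard := by
    rw [card_eq_sum_card_group_div_card_stabilizer G P]
    rw [← Equiv.sum_comp e]
    refine Finset.sum_congr rfl fun i _ => ?_
    have := card_orbit_stab (G := G) (e i).out
    rw [← Nat.card_eq_fintype_card, ← Nat.card_eq_fintype_card, ← this]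
    exact Nat.mul_div_cancel _ Nat.card_pos
  rw [h1, ← Nat.card_eq_fintype_card (α := G),
    ← Finset.add_sum_erase _ _ (Finset.mem_univ (1 : G))] at hb
  rw [← hb]
  congr 1
  · rw [← h2]
    simp [fixedBy]
  · rw [Finset.sum_congr rfl (g := fun _ => 2)]
    · simp [Finset.card_erase_of_mem, mul_comm]
    · intro g hg
      rw [← h.ncard (Finset.ne_of_mem_erase hg), ← Nat.card_coe_set_eq, Nat.card_eq_fintype_card]

/-- counting in a normal subgroup -/
lemma PoleAct.normal_count [Finite G] (h : PoleAct G P neg) (K : Subgroup G) [K.Normal] (x : P) :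
    (orbit G x).ncard * (Nat.card (K ⊓ stabilizer G x : Subgroup G) - 1) ≤ 2 * (Nat.card K - 1) := by
  classical
  have := h.finite
  have := Fintype.ofFinite G
  have := Fintype.ofFinite P
  set O : Finset P := (orbit G x).toFinset with hO
  set K' : Finset G := Finset.univ.filter (fun g => g ∈ K ∧ g ≠ 1) with hK'
  have key : ∑ y ∈ O, (K'.filter (fun g => g • y = y)).card
      = ∑ g ∈ K', (O.filter (fun y => g • y = y)).card := by
    simp only [Finset.card_filter]
    exact Finset.sum_comm
  have cK : ∀ L : Subgroup G, (Finset.univ.filter (fun g => g ∈ L ∧ g ≠ 1)).card = Nat.card L - 1 := by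
    intro L
    have : Finset.univ.filter (fun g => g ∈ L ∧ g ≠ 1) = (Finset.univ.filter (fun g => g ∈ L)).erase 1 := by
      ext g; simp [and_comm]
    rw [this, Finset.card_erase_of_mem (by simp [L.one_mem]), Nat.card_eq_fintype_card,
      Fintype.card_subtype]
  have l : ∑ y ∈ O, (K'.filter (fun g => g • y = y)).card
      = (orbit G x).ncard * (Nat.card (K ⊓ stabilizer G x : Subgroup G) - 1) := by
    rw [Finset.sum_congr rfl (g := fun _ => Nat.card (K ⊓ stabilizer G x : Subgroup G) - 1)]
    · rw [Finset.sum_const, smul_eq_mul, Set.ncard_eq_toFinset_card']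
    · intro y hy
      obtain ⟨a, rfl⟩ : ∃ a : G, a • x = y := mem_orbit_iff.mp (Set.mem_toFinset.mp hy)
      rw [← cK]
      symm
      apply Finset.card_bij (fun g _ => a * g * a⁻¹)
      · intro g hg
        simp only [Finset.mem_filter, Finset.mem_univ, true_and, hK', Subgroup.mem_inf,
          mem_stabilizer_iff] at hg ⊢
        refine ⟨⟨‹K.Normal›.conj_mem g hg.1.1 a, fun e => hg.2 (conj_eq_one_iff.mp e)⟩, ?_⟩
        rw [mul_smul, mul_smul, inv_smul_smul, hg.1.2]
      · intro g _ g' _ e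
        simpa using e
      · intro g hg
        simp only [Finset.mem_filter, Finset.mem_univ, true_and, hK', Subgroup.mem_inf,
          mem_stabilizer_iff] at hg
        refine ⟨a⁻¹ * g * a, ?_, by group⟩
        simp only [Finset.mem_filter, Finset.mem_univ, true_and, Subgroup.mem_inf,
          mem_stabilizer_iff]
        refine ⟨⟨by simpa using ‹K.Normal›.conj_mem g hg.1.1 a⁻¹, ?_⟩, ?_⟩
        · rw [mul_smul, mul_smul, hg.2, inv_smul_smul]
        · intro e
          apply hg.1.2
          have : a⁻¹ * g * a⁻¹⁻¹ = 1 := by simpa using e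
          exact conj_eq_one_iff.mp this
  rw [← l, key, ← cK K, mul_comm]
  apply Finset.sum_le_card_nsmul
  intro g hg
  have hg1 : g ≠ 1 := by simp [hK'] at hg; exact hg.2
  rw [← h.ncard hg1, ← Set.ncard_coe_finset]
  apply Set.ncard_le_ncard _ (Set.toFinite _)
  intro y hy
  simp at hy
  exact hy.2

/-- generic case analysis of the orbit equation -/
lemma arith {a b c da db dc N : ℕ} (ha : 2 ≤ a) (hab : a ≤ b) (hbc : b ≤ c)
    (h1 : da * a = N) (h2 : db * b = N) (h3 : dc * c = N) (hs : da + db + dc = N + 2) :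
    (2 * c = N) ∨ (a = 2 ∧ b = 3 ∧ ((c = 3 ∧ N = 12) ∨ (c = 4 ∧ N = 24) ∨ (c = 5 ∧ N = 60))) := by
  have ha2 : a = 2 := by
    by_contra hne
    have e1 : da * 3 ≤ da * a := Nat.mul_le_mul_left _ (by omega)
    have e2 : db * 3 ≤ db * b := Nat.mul_le_mul_left _ (by omega)
    have e3 : dc * 3 ≤ dc * c := Nat.mul_le_mul_left _ (by omega)
    omega
  subst ha2
  have hb : b < 4 := by
    by_contra hne
    have e2 : db * 4 ≤ db * b := Nat.mul_le_mul_left _ (by omega)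
    have e3 : dc * 4 ≤ dc * c := Nat.mul_le_mul_left _ (by omega)
    omega
  obtain rfl | rfl : b = 2 ∨ b = 3 := by omega
  · left
    have : dc = 2 := by omega
    subst this; exact h3
  · right
    refine ⟨rfl, rfl, ?_⟩
    have hc : c < 6 := by
      by_contra hne
      have e3 : dc * 6 ≤ dc * c := Nat.mul_le_mul_left _ (by omega)
      omega
    obtain rfl | rfl | rfl : c = 3 ∨ c = 4 ∨ c = 5 := by omega
    all_goals omega

/-- The possible configurations of poles. -/
lemma PoleAct.cases [Finite G] [Nontrivial G] (h : PoleAct G P neg) :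
    (∃ p : P, stabilizer G p = ⊤) ∨
    (∃ p : P, 2 * Nat.card (stabilizer G p) = Nat.card G) ∨
    (Nat.card G = 12 ∧ ∃ p : P, Nat.card (stabilizer G p) = 3) ∨
    (Nat.card G = 24 ∧ ∃ p : P, Nat.card (stabilizer G p) = 3 ∧
      (∀ x : P, Nat.card (stabilizer G x) = 3 → x ∈ orbit G p) ∧
      ∀ x : P, Nat.card (stabilizer G x) = 2 ∨ Nat.card (stabilizer G x) = 3 ∨
        Nat.card (stabilizer G x) = 4) ∨
    (Nat.card G = 60 ∧ ∃ p : P, Nat.card (stabilizer G p) = 2 ∧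
      (∀ x : P, Nat.card (stabilizer G x) = 2 → x ∈ orbit G p) ∧
      ∀ x : P, Nat.card (stabilizer G x) = 2 ∨ Nat.card (stabilizer G x) = 3 ∨
        Nat.card (stabilizer G x) = 5) := by
  classical
  have := h.finite
  have hN : 2 ≤ Nat.card G := Finite.one_lt_card
  obtain ⟨r, ⟨e0⟩⟩ := Finite.exists_equiv_fin (orbitRel.Quotient G P)
  set e1 := e0.symm
  set σ := Tuple.sort (fun i => Nat.card (stabilizer G (e1 i).out))
  have hmono : Monotone ((fun i => Nat.card (stabilizer G (e1 i).out)) ∘ σ) := Tuple.monotone_sort _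
  set e : Fin r ≃ orbitRel.Quotient G P := σ.trans e1 with he
  have hm : ∀ i j, i ≤ j → Nat.card (stabilizer G (e i).out) ≤ Nat.card (stabilizer G (e j).out) :=
    fun i j hij => hmono hij
  have hb := h.burnside (Fin r) e
  have hos := fun i => card_orbit_stab (G := G) (e i).out
  have h2 := fun i => h.two_le (e i).out
  -- every point lies in one of the orbits
  have hcov : ∀ x : P, ∃ i, x ∈ orbit G (e i).out := by
    intro x
    refine ⟨e.symm (Quotient.mk'' x), ?_⟩
    rw [e.apply_symm_apply]
    have : (orbitRel G P) (Quotient.out (Quotient.mk'' x : orbitRel.Quotient G P)) x :=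
      Quotient.exact (Quotient.out_eq _)
    exact (orbitRel G P).symm this
  have hst : ∀ x y : P, x ∈ orbit G y → Nat.card (stabilizer G x) = Nat.card (stabilizer G y) := by
    intro x y hxy
    have e1 := card_orbit_stab (G := G) x
    have e2 := card_orbit_stab (G := G) y
    rw [orbit_eq_iff.mpr hxy, ← e2] at e1
    have : 0 < (orbit G y).ncard := by
      rw [Set.ncard_pos]; exact nonempty_orbit y
    exact Nat.eq_of_mul_eq_mul_left this e1
  have hd1 : ∀ i, 1 ≤ (orbit G (e i).out).ncard := by
    intro i
    rw [Nat.one_le_iff_ne_zero, ← Nat.pos_iff_ne_zero, Set.ncard_pos]; exact nonempty_orbit _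
  have hd2 : ∀ i, 2 * (orbit G (e i).out).ncard ≤ Nat.card G := by
    intro i
    rw [← hos i, mul_comm]
    exact Nat.mul_le_mul_left _ (h2 i)
  generalize hNN : Nat.card G = N at *
  rw [Fintype.card_fin] at hb
  have hr4 : r < 4 := by
    have : 2 * ∑ i, (orbit G (e i).out).ncard ≤ r * N := by
      rw [Finset.mul_sum]
      calc _ ≤ ∑ i : Fin r, N := Finset.sum_le_sum fun i _ => hd2 i
        _ = _ := by simp
    by_contra hr
    have : 4 * N ≤ r * N := Nat.mul_le_mul_right _ (by omega)
    omega
  have hr2 : 2 ≤ r := by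
    by_contra hr
    obtain rfl | rfl : r = 0 ∨ r = 1 := by omega
    · simp at hb; omega
    · have := hd1 0
      simp at hb; omega
  obtain rfl | rfl : r = 2 ∨ r = 3 := by omega
  · left
    refine ⟨(e 0).out, ?_⟩
    rw [Fin.sum_univ_two] at hb
    have := hd1 0
    have := hd1 1
    have h0 : (orbit G (e 0).out).ncard = 1 := by omega
    have h3 := hos 0
    rw [h0, one_mul] at h3
    exact Subgroup.eq_top_of_card_eq _ (by rw [h3, hNN])
  · right
    rw [Fin.sum_univ_three] at hb
    have hA := arith (h2 0) (hm 0 1 (by decide)) (hm 1 2 (by decide)) (hos 0) (hos 1) (hos 2) (by omega)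
    have hcov' : ∀ x : P, (x ∈ orbit G (e 0).out ∨ x ∈ orbit G (e 1).out ∨ x ∈ orbit G (e 2).out) := by
      intro x
      obtain ⟨i, hi⟩ := hcov x
      fin_cases i
      · exact Or.inl hi
      · exact Or.inr (Or.inl hi)
      · exact Or.inr (Or.inr hi)
    rcases hA with hA | ⟨ha, hb, ⟨hc, hN⟩ | ⟨hc, hN⟩ | ⟨hc, hN⟩⟩
    · exact Or.inl ⟨_, hA⟩
    · exact Or.inr (Or.inl ⟨hN, _, hb⟩)
    · refine Or.inr (Or.inr (Or.inl ⟨hN, _, hb, ?_, ?_⟩))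
      · intro x hx
        rcases hcov' x with h | h | h
        · have := hst _ _ h; omega
        · exact h
        · have := hst _ _ h; omega
      · intro x
        rcases hcov' x with h | h | h <;> have := hst _ _ h <;> omega
    · refine Or.inr (Or.inr (Or.inr ⟨hN, _, ha, ?_, ?_⟩))
      · intro x hx
        rcases hcov' x with h | h | h
        · exact h
        · have := hst _ _ h; omega
        · have := hst _ _ h; omega
      · intro x
        rcases hcov' x with h | h | h <;> have := hst _ _ h <;> omega

lemma dihedral_of [Finite G] (H : Subgroup G) [IsCyclic H] (hi : H.index = 2)
    (hs : ∀ g ∉ H, g * g = 1) : Nonempty (G ≃* DihedralGroup (Nat.card H)) := by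
  set n := Nat.card H with hn
  have : NeZero n := ⟨Nat.card_pos.ne'⟩
  let φ : Multiplicative (ZMod n) ≃* H := zmodCyclicMulEquiv ‹_›
  obtain ⟨s, hsH⟩ : ∃ s, s ∉ H := by
    by_contra! hc
    rw [(Subgroup.eq_top_iff' H).mpr hc] at hi
    simp at hi
  let ρ : ZMod n → G := fun i => (φ (Multiplicative.ofAdd i) : G)
  have hρH : ∀ i, ρ i ∈ H := fun i => (φ _).2
  have hadd : ∀ i j, ρ (i + j) = ρ i * ρ j := fun i j => by simp [ρ, ofAdd_add]
  have hneg : ∀ i, ρ (-i) = (ρ i)⁻¹ := fun i => by simp [ρ, ofAdd_neg]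
  have hinj : Function.Injective ρ := fun i j hij => by
    have := φ.injective (Subtype.ext hij)
    simpa using this
  have hss : s * s = 1 := hs s hsH
  have hcomm : ∀ i, ρ i * s = s * ρ (-i) := by
    intro i
    have h1 : s * ρ i ∉ H := fun hm => hsH ((H.mul_mem_cancel_right (hρH i)).mp hm)
    have h2 := hs _ h1
    rw [hneg]
    have h3 : s * (ρ i * s) * ρ i = 1 := by rw [← h2]; group
    have h4 : s * (ρ i * s) = (ρ i)⁻¹ := eq_inv_of_mul_eq_one_left h3
    rw [← h4, ← mul_assoc, hss, one_mul]
  let f : DihedralGroup n → G := fun x => match x with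
    | .r i => ρ i
    | .sr i => s * ρ i
  have fr : ∀ i, f (.r i) = ρ i := fun _ => rfl
  have fs : ∀ i, f (.sr i) = s * ρ i := fun _ => rfl
  have hmul : ∀ x y, f (x * y) = f x * f y := by
    rintro (i | i) (j | j)
    · rw [DihedralGroup.r_mul_r, fr, fr, fr, hadd]
    · rw [DihedralGroup.r_mul_sr, fr, fs, fs, ← mul_assoc, hcomm, mul_assoc, ← hadd]
      congr 2; ring
    · rw [DihedralGroup.sr_mul_r, fr, fs, fs, hadd, mul_assoc]
    · rw [DihedralGroup.sr_mul_sr, fr, fs, fs, mul_assoc, ← mul_assoc (ρ i), hcomm, mul_assoc s,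
        ← mul_assoc s s, hss, one_mul, ← hadd]
      congr 1; ring
  have fin : Function.Injective f := by
    rintro (i | i) (j | j) hij
    · rw [fr, fr] at hij; rw [hinj hij]
    · rw [fr, fs] at hij
      exact absurd ((H.mul_mem_cancel_right (hρH j)).mp (hij ▸ hρH i)) hsH
    · rw [fr, fs] at hij
      exact absurd ((H.mul_mem_cancel_right (hρH i)).mp (hij ▸ hρH j)) hsH
    · rw [fs, fs] at hij; rw [hinj (mul_left_cancel hij)]
  have hcard : Nat.card (DihedralGroup n) = Nat.card G := by
    rw [DihedralGroup.nat_card, ← H.card_mul_index, hi, mul_comm]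
  have hbij : Function.Bijective f := (Nat.bijective_iff_injective_and_card f).mpr ⟨fin, hcard⟩
  exact ⟨(MulEquiv.ofBijective (MonoidHom.mk' f hmul) hbij).symm⟩

lemma exists_hom (H : Subgroup G) (k : ℕ) [NeZero k] (hi : H.index = k) (hc : H.normalCore = ⊥) :
    ∃ f : G →* Equiv.Perm (Fin k), Function.Injective f := by
  have hcard : Nat.card (G ⧸ H) = k := hi
  have : Finite (G ⧸ H) := Nat.finite_of_card_ne_zero (by rw [hcard]; exact NeZero.ne k)
  let e : G ⧸ H ≃ Fin k := Finite.equivFinOfCardEq hcard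
  refine ⟨(e.permCongrHom.toMonoidHom).comp (MulAction.toPermHom G (G ⧸ H)), ?_⟩
  have : Function.Injective (MulAction.toPermHom G (G ⧸ H)) := by
    rw [← MonoidHom.ker_eq_bot_iff, ← Subgroup.normalCore_eq_ker, hc]
  exact e.permCongrHom.injective.comp this

lemma iso_perm (H : Subgroup G) (k : ℕ) [NeZero k] (hi : H.index = k) (hc : H.normalCore = ⊥)
    (hN : Nat.card G = k.factorial) : Nonempty (G ≃* Equiv.Perm (Fin k)) := by
  obtain ⟨f, hf⟩ := exists_hom H k hi hc
  refine ⟨MulEquiv.ofBijective f ((Nat.bijective_iff_injective_and_card f).mpr ⟨hf, ?_⟩)⟩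
  rw [hN, Nat.card_perm, Nat.card_fin]

lemma iso_alt (H : Subgroup G) (k : ℕ) [NeZero k] (hi : H.index = k) (hc : H.normalCore = ⊥)
    (hN : 2 * Nat.card G = k.factorial) : Nonempty (G ≃* alternatingGroup (Fin k)) := by
  obtain ⟨f, hf⟩ := exists_hom H k hi hc
  have h1 : Nat.card f.range = Nat.card G := (Nat.card_congr (f.ofInjective hf).toEquiv).symm
  have h2 : f.range.index = 2 := by
    have h3 := f.range.card_mul_index
    rw [Nat.card_perm, Nat.card_fin, ← hN, h1, mul_comm 2] at h3
    refine Nat.eq_of_mul_eq_mul_left ?_ h3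
    have := Nat.factorial_pos k
    omega
  have h3 := Equiv.Perm.eq_alternatingGroup_of_index_eq_two h2
  exact ⟨(f.ofInjective hf).trans (MulEquiv.subgroupCongr h3)⟩

/-- elements preserving the axis through `p` -/
def PoleAct.axis (h : PoleAct G P neg) (p : P) : Subgroup G where
  carrier := {g | g • p = p ∨ g • p = neg p}
  one_mem' := Or.inl (one_smul _ _)
  mul_mem' := by
    rintro a b (ha | ha) (hb | hb)
    · left; rw [mul_smul, hb, ha]
    · right; rw [mul_smul, hb, h.sm, ha]
    · right; rw [mul_smul, hb, ha]
    · left; rw [mul_smul, hb, h.sm, ha, h.nn]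
  inv_mem' := by
    rintro a (ha | ha)
    · left; rw [inv_smul_eq_iff, ha]
    · right; rw [inv_smul_eq_iff, h.sm, ha, h.nn]

lemma PoleAct.mem_axis (h : PoleAct G P neg) {p : P} {g : G} :
    g ∈ h.axis p ↔ g • p = p ∨ g • p = neg p := Iff.rfl

lemma PoleAct.stab_neg (h : PoleAct G P neg) (p : P) : stabilizer G (neg p) = stabilizer G p := by
  ext g; exact h.neg_fix

lemma PoleAct.card_axis (h : PoleAct G P neg) {p : P} (hp : neg p ∈ orbit G p) :
    Nat.card (h.axis p) = 2 * Nat.card (stabilizer G p) := by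
  obtain ⟨t, ht⟩ := mem_orbit_iff.mp hp
  have hle : stabilizer G p ≤ h.axis p := fun g hg => Or.inl hg
  have hi : ((stabilizer G p).subgroupOf (h.axis p)).index = 2 := by
    rw [Subgroup.index_eq_two_iff]
    refine ⟨⟨t, Or.inr ht⟩, ?_⟩
    rintro ⟨b, hb⟩
    simp only [Subgroup.mem_subgroupOf, mem_stabilizer_iff, Subgroup.coe_mul, mul_smul, ht]
    rcases hb with hb | hb
    · right
      refine ⟨hb, ?_⟩
      rw [h.sm, hb]; exact h.ne p
    · left
      refine ⟨by rw [h.sm, hb, h.nn], ?_⟩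
      rw [hb]; exact h.ne p
  have h1 := ((stabilizer G p).subgroupOf (h.axis p)).card_mul_index
  rw [hi, Nat.card_congr (Subgroup.subgroupOfEquivOfLe hle).toEquiv] at h1
  omega

lemma two_le_inf [Finite G] {K : Subgroup G} {g : G} (hg : g ≠ 1) (hK : g ∈ K) {x : P}
    (hx : g • x = x) : 2 ≤ Nat.card (K ⊓ stabilizer G x : Subgroup G) := by
  have : Nontrivial (K ⊓ stabilizer G x : Subgroup G) :=
    ⟨⟨⟨g, hK, hx⟩, 1, fun e => hg (congrArg Subtype.val e)⟩⟩
  exact Finite.one_lt_card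

lemma PoleAct.exists_pole (h : PoleAct G P neg) (g : G) (hg : g ≠ 1) : ∃ x : P, g • x = x := by
  obtain ⟨p, hp⟩ := h.fix g hg
  exact ⟨p, (hp p).mpr (Or.inl rfl)⟩

lemma index_of_card [Finite G] {H : Subgroup G} {m k N : ℕ} (hH : Nat.card H = m)
    (hN : Nat.card G = N) (hm : 0 < m) (hk : N = m * k) : H.index = k := by
  have := H.card_mul_index
  rw [hH, hN, hk] at this
  exact Nat.eq_of_mul_eq_mul_left hm this

lemma PoleAct.dihedral [Finite G] (h : PoleAct G P neg) {p : P}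
    (hp : 2 * Nat.card (stabilizer G p) = Nat.card G) :
    ∃ n, 2 ≤ n ∧ Nonempty (G ≃* DihedralGroup n) := by
  refine ⟨Nat.card (stabilizer G p), h.two_le p, ?_⟩
  have := h.cyc p
  have hi : (stabilizer G p).index = 2 :=
    index_of_card rfl hp.symm Nat.card_pos (mul_comm _ _)
  apply dihedral_of _ hi
  intro g hg
  have hnorm : (stabilizer G p).Normal := Subgroup.normal_of_index_eq_two hi
  obtain ⟨a, ha, hap⟩ := h.nt p
  have h1 : (g⁻¹ * a * g) • p = p := by
    simpa using hnorm.conj_mem a hap g⁻¹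
  have h2 : a • (g • p) = g • p := by
    rw [mul_assoc, mul_smul, inv_smul_eq_iff, mul_smul] at h1; exact h1
  rcases (h.two ha hap (g • p)).mp h2 with h3 | h3
  · exact absurd h3 hg
  · exact h.sq h3

lemma PoleAct.tetra [Finite G] (h : PoleAct G P neg) (hN : Nat.card G = 12) {p : P}
    (hp : Nat.card (stabilizer G p) = 3) : Nonempty (G ≃* alternatingGroup (Fin 4)) := by
  refine iso_alt (stabilizer G p) 4 (index_of_card hp hN (by norm_num) (by norm_num)) ?_
    (by rw [hN]; rfl)
  rcases (stabilizer G p).normalCore.bot_or_exists_ne_one with hb | ⟨g, hg, hg1⟩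
  · exact hb
  exfalso
  have h1 := h.normal_count (stabilizer G p).normalCore p
  have h2 := two_le_inf hg1 hg (Subgroup.normalCore_le _ hg : g ∈ stabilizer G p)
  rw [inf_eq_left.mpr (Subgroup.normalCore_le _)] at h1 h2
  have h3 := card_orbit_stab (G := G) p
  rw [hp, hN] at h3
  have h4 : (orbit G p).ncard = 4 := by omega
  rw [h4] at h1
  omega

lemma PoleAct.octa [Finite G] (h : PoleAct G P neg) (hN : Nat.card G = 24) {p : P}
    (hp : Nat.card (stabilizer G p) = 3)
    (ho : ∀ x : P, Nat.card (stabilizer G x) = 3 → x ∈ orbit G p)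
    (ha : ∀ x : P, Nat.card (stabilizer G x) = 2 ∨ Nat.card (stabilizer G x) = 3 ∨
        Nat.card (stabilizer G x) = 4) : Nonempty (G ≃* Equiv.Perm (Fin 4)) := by
  have hax := h.card_axis (ho (neg p) (by rw [h.stab_neg, hp]))
  rw [hp] at hax
  refine iso_perm (h.axis p) 4 (index_of_card hax hN (by norm_num) (by norm_num)) ?_
    (by rw [hN]; rfl)
  rcases (h.axis p).normalCore.bot_or_exists_ne_one with hb | ⟨g, hg, hg1⟩
  · exact hb
  exfalso
  set K := (h.axis p).normalCore with hK
  have hKle : K ≤ h.axis p := Subgroup.normalCore_le _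
  have hKc : Nat.card K ≤ 6 := by
    have := Subgroup.card_le_of_le hKle; omega
  -- `K` meets the stabilizer trivially
  have hKs : ∀ k ∈ K, k • p = p → k = 1 := by
    intro k hk hkp
    by_contra hk1
    have h1 := h.normal_count K p
    have h2 := two_le_inf hk1 hk hkp
    have h3 : Nat.card (K ⊓ stabilizer G p : Subgroup G) ∣ 3 := by
      rw [← hp]; exact Subgroup.card_dvd_of_le inf_le_right
    have h4 : Nat.card (K ⊓ stabilizer G p : Subgroup G) = 3 := by
      rcases (Nat.dvd_prime Nat.prime_three).mp h3 with h | h <;> omega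
    have h5 := card_orbit_stab (G := G) p
    rw [hp, hN] at h5
    have h6 : (orbit G p).ncard = 8 := by omega
    rw [h4, h6] at h1
    omega
  have hK2 : Nat.card K ≤ 2 := by
    have : ∀ k : K, k = 1 ∨ k = ⟨g, hg⟩ := by
      rintro ⟨k, hk⟩
      by_cases hk1 : k = 1
      · left; exact Subtype.ext hk1
      right
      have e1 : k • p = neg p := (hKle hk).resolve_left fun e => hk1 (hKs k hk e)
      have e2 : g • p = neg p := (hKle hg).resolve_left fun e => hg1 (hKs g hg e)
      have e3 : (g⁻¹ * k) • p = p := by rw [mul_smul, e1, inv_smul_eq_iff, e2]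
      have e4 := hKs _ (K.mul_mem (K.inv_mem hg) hk) e3
      exact Subtype.ext (inv_mul_eq_one.mp e4).symm
    have hs : (Set.univ : Set K) ⊆ {1, ⟨g, hg⟩} := fun k _ => this k
    have := Set.ncard_le_ncard hs (Set.toFinite _)
    rw [Set.ncard_univ] at this
    have h2 := Set.ncard_insert_le (1 : K) {⟨g, hg⟩}
    rw [Set.ncard_singleton] at h2
    omega
  obtain ⟨x, hx⟩ := h.exists_pole g hg1
  have h1 := h.normal_count K x
  have h2 := two_le_inf hg1 hg hx
  have h3 := card_orbit_stab (G := G) x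
  rw [hN] at h3
  have h4 : 3 ≤ (orbit G x).ncard := by
    rcases ha x with h | h | h <;> rw [h] at h3 <;> omega
  have h5 : 3 * 1 ≤ (orbit G x).ncard * (Nat.card (K ⊓ stabilizer G x : Subgroup G) - 1) :=
    Nat.mul_le_mul h4 (by omega)
  omega

lemma PoleAct.icosa [Finite G] (h : PoleAct G P neg) (hN : Nat.card G = 60) {p : P}
    (hp : Nat.card (stabilizer G p) = 2)
    (ho : ∀ x : P, Nat.card (stabilizer G x) = 2 → x ∈ orbit G p)
    (ha : ∀ x : P, Nat.card (stabilizer G x) = 2 ∨ Nat.card (stabilizer G x) = 3 ∨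
        Nat.card (stabilizer G x) = 5) : Nonempty (G ≃* alternatingGroup (Fin 5)) := by
  have hax := h.card_axis (ho (neg p) (by rw [h.stab_neg, hp]))
  rw [hp] at hax
  set Q := h.axis p with hQ
  -- stabilizers of order two
  have huniq : ∀ x : P, Nat.card (stabilizer G x) = 2 → ∀ a b : G, a ≠ 1 → b ≠ 1 →
      a • x = x → b • x = x → a = b := by
    intro x hx a b ha1 hb1 hax hbx
    obtain ⟨y, hy, hy'⟩ := (Nat.card_eq_two_iff' (1 : stabilizer G x)).mp hx
    have e1 := hy' ⟨a, hax⟩ (fun e => ha1 (congrArg Subtype.val e))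
    have e2 := hy' ⟨b, hbx⟩ (fun e => hb1 (congrArg Subtype.val e))
    exact congrArg Subtype.val (e1.trans e2.symm)
  obtain ⟨u, hu1, hup⟩ := h.nt p
  have huu : u * u = 1 := by
    by_contra hne
    have := huniq p hp (u * u) u hne hu1 (by rw [mul_smul, hup, hup]) hup
    exact hu1 (by simpa using this)
  -- the centralizer of `u` is `Q`
  have hcent : ∀ g : G, g ∈ Q ↔ g * u = u * g := by
    intro g
    constructor
    · intro hg
      have e : (g * u * g⁻¹) • p = p := by
        rcases hg with hg | hg
        · rw [mul_smul, mul_smul, inv_smul_eq_iff.mpr hg.symm, hup, hg]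
        · have : g⁻¹ • p = neg p := by rw [inv_smul_eq_iff, h.sm, hg, h.nn]
          rw [mul_smul, mul_smul, this, h.neg_fix.mpr hup, h.sm, hg, h.nn]
      have := huniq p hp _ u (fun e => hu1 (conj_eq_one_iff.mp e)) hu1 e hup
      exact mul_inv_eq_iff_eq_mul.mp this
    · intro hg
      have e : u • (g • p) = g • p := by rw [← mul_smul, ← hg, mul_smul, hup]
      exact (h.two hu1 hup _).mp e
  have huQ : u ∈ Q := (hcent u).mpr rfl
  have hQsq : ∀ v ∈ Q, v * v = 1 := by
    rintro v (hv | hv)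
    · by_cases hv1 : v = 1
      · simp [hv1]
      rw [huniq p hp v u hv1 hu1 hv hup, huu]
    · exact h.sq hv
  have hQcomm : ∀ v ∈ Q, ∀ w ∈ Q, v * w = w * v := by
    intro v hv w hw
    have e1 := hQsq _ (Q.mul_mem hv hw)
    have e2 := eq_inv_of_mul_eq_one_left (hQsq v hv)
    have e3 := eq_inv_of_mul_eq_one_left (hQsq w hw)
    have e4 := eq_inv_of_mul_eq_one_left e1
    rw [e4, mul_inv_rev, ← e2, ← e3]
  -- every involution of `Q` is conjugate to `u` in the normalizer
  have hconj : ∀ v ∈ Q, v ≠ 1 → ∃ g ∈ Subgroup.normalizer (Q : Set G), g * u * g⁻¹ = v := by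
    intro v hv hv1
    obtain ⟨x, hx⟩ := h.exists_pole v hv1
    have hx2 : Nat.card (stabilizer G x) = 2 := by
      have : orderOf (⟨v, hx⟩ : stabilizer G x) = 2 := by
        apply orderOf_eq_prime
        · rw [pow_two]; exact Subtype.ext (hQsq v hv)
        · exact fun e => hv1 (congrArg Subtype.val e)
      have hd : 2 ∣ Nat.card (stabilizer G x) := this ▸ orderOf_dvd_natCard _
      rcases ha x with h | h | h <;> omega
    obtain ⟨g, hg⟩ := mem_orbit_iff.mp (ho x hx2)
    have hguv : g * u * g⁻¹ = v := by
      refine huniq x hx2 _ _ (fun e => hu1 (conj_eq_one_iff.mp e)) hv1 ?_ hx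
      rw [mul_smul, mul_smul, inv_smul_eq_iff.mpr hg.symm, hup, hg]
    refine ⟨g, ?_, hguv⟩
    have hmap : Q ≤ Q.map (MulAut.conj g).toMonoidHom := by
      intro w hw
      refine ⟨g⁻¹ * w * g, ?_, by simp [mul_assoc]⟩
      apply (hcent _).mpr
      have := hQcomm w hw v hv
      rw [← hguv] at this
      have e : g⁻¹ * (w * (g * u * g⁻¹)) * g = g⁻¹ * ((g * u * g⁻¹) * w) * g := by rw [this]
      simpa [mul_assoc] using e
    have heq : Q = Q.map (MulAut.conj g).toMonoidHom := by
      apply Subgroup.eq_of_le_of_card_ge hmap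
      exact (Nat.card_congr (Q.equivMapOfInjective _ (MulAut.conj g).injective).toEquiv).symm.le
    rw [Subgroup.mem_normalizer_iff]
    intro w
    constructor
    · intro hw
      have : (MulAut.conj g).toMonoidHom w ∈ Q.map (MulAut.conj g).toMonoidHom :=
        Subgroup.mem_map_of_mem _ hw
      rw [← heq] at this
      exact this
    · intro hw
      change g * w * g⁻¹ ∈ Q at hw
      rw [heq] at hw
      obtain ⟨w', hw', e⟩ := hw
      have : w' = w := (MulAut.conj g).injective e
      exact this ▸ hw'
  set M := Subgroup.normalizer (Q : Set G) with hM
  have hQM : Q ≤ M := Subgroup.le_normalizer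
  -- count the normalizer
  have hMc : Nat.card M = 12 := by
    let A := MulAut.conj.comp M.subtype
    let _ : MulAction M G := MulAction.compHom G A
    have hsm : ∀ (m : M) (x : G), m • x = m.1 * x * m.1⁻¹ := fun m x => rfl
    have h1 := card_orbit_stab (G := M) u
    have h2 : stabilizer M u = Q.subgroupOf M := by
      ext m
      rw [mem_stabilizer_iff, hsm, Subgroup.mem_subgroupOf, hcent, mul_inv_eq_iff_eq_mul]
    have h3 : (orbit M u) = (Q : Set G) \ {1} := by
      ext v
      constructor
      · rintro ⟨m, rfl⟩
        refine ⟨(Subgroup.mem_normalizer_iff.mp m.2 u).mp huQ, ?_⟩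
        exact fun e => hu1 (conj_eq_one_iff.mp e)
      · rintro ⟨hv, hv1⟩
        obtain ⟨g, hg, e⟩ := hconj v hv hv1
        exact ⟨⟨g, hg⟩, e⟩
    rw [h2, h3, Nat.card_congr (Subgroup.subgroupOfEquivOfLe hQM).toEquiv, hax,
      Set.ncard_sdiff_singleton_of_mem Q.one_mem, ← Nat.card_coe_set_eq] at h1
    change (Nat.card Q - 1) * _ = _ at h1
    rw [hax] at h1
    exact h1.symm
  refine iso_alt M 5 (index_of_card hMc hN (by norm_num) (by norm_num)) ?_
    (by rw [hN]; rfl)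
  rcases M.normalCore.bot_or_exists_ne_one with hb | ⟨g, hg, hg1⟩
  · exact hb
  exfalso
  have hKc : Nat.card M.normalCore ≤ 12 := by
    rw [← hMc]; exact Subgroup.card_le_of_le (Subgroup.normalCore_le _)
  obtain ⟨x, hx⟩ := h.exists_pole g hg1
  have h1 := h.normal_count M.normalCore x
  have h2 := two_le_inf hg1 hg hx
  have h3 := card_orbit_stab (G := G) x
  have h4 : Nat.card (M.normalCore ⊓ stabilizer G x : Subgroup G) ∣ Nat.card (stabilizer G x) :=
    Subgroup.card_dvd_of_le inf_le_right
  have hpr : (Nat.card (stabilizer G x)).Prime := by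
    rcases ha x with h | h | h <;> rw [h] <;> norm_num
  have h5 : Nat.card (M.normalCore ⊓ stabilizer G x : Subgroup G) = Nat.card (stabilizer G x) := by
    rcases (Nat.dvd_prime hpr).mp h4 with h | h <;> omega
  rw [h5] at h1
  rw [hN] at h3
  rcases ha x with h | h | h <;> rw [h] at h1 h3 <;> omega

theorem PoleAct.main [Finite G] (h : PoleAct G P neg) :
    (∃ n : ℕ, 1 ≤ n ∧ Nonempty (G ≃* Multiplicative (ZMod n))) ∨
    (∃ n : ℕ, 2 ≤ n ∧ Nonempty (G ≃* DihedralGroup n)) ∨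
    Nonempty (G ≃* alternatingGroup (Fin 4)) ∨
    Nonempty (G ≃* Equiv.Perm (Fin 4)) ∨
    Nonempty (G ≃* alternatingGroup (Fin 5)) := by
  have hcyc : IsCyclic G → ∃ n : ℕ, 1 ≤ n ∧ Nonempty (G ≃* Multiplicative (ZMod n)) :=
    fun hc => ⟨Nat.card G, Nat.card_pos, ⟨(zmodCyclicMulEquiv hc).symm⟩⟩
  rcases subsingleton_or_nontrivial G with hs | hs
  · exact Or.inl (hcyc inferInstance)
  rcases h.cases with ⟨p, hp⟩ | ⟨p, hp⟩ | ⟨hN, p, hp⟩ | ⟨hN, p, hp, ho, ha⟩ | ⟨hN, p, hp, ho, ha⟩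
  · left
    apply hcyc
    have := h.cyc p
    rw [hp] at this
    exact Subgroup.topEquiv.isCyclic.mp this
  · exact Or.inr (Or.inl (h.dihedral hp))
  · exact Or.inr (Or.inr (Or.inl (h.tetra hN hp)))
  · exact Or.inr (Or.inr (Or.inr (Or.inl (h.octa hN hp ho ha))))
  · exact Or.inr (Or.inr (Or.inr (Or.inr (h.icosa hN hp ho ha))))

end
end SO3

namespace SO3
open Matrix

section
variable (G : Subgroup (Matrix.orthogonalGroup (Fin 3) ℝ))

lemma orth (g : Matrix.orthogonalGroup (Fin 3) ℝ) :
    (g : Matrix (Fin 3) (Fin 3) ℝ) * (g : Matrix (Fin 3) (Fin 3) ℝ)ᵀ = 1 :=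
  (Matrix.mem_orthogonalGroup_iff (Fin 3) ℝ).mp g.2

/-- the matrix of a group element -/
def mat (g : G) : Matrix (Fin 3) (Fin 3) ℝ := g.1.1

lemma mat_mul (g k : G) : mat G (g * k) = mat G g * mat G k := rfl
lemma mat_one : mat G 1 = 1 := rfl
lemma mat_orth (g : G) : mat G g * (mat G g)ᵀ = 1 := orth g.1
lemma mat_inj {g k : G} (h : mat G g = mat G k) : g = k := Subtype.ext (Subtype.ext h)

/-- The poles of `G`. -/
def Pole : Type :=
  {v : Fin 3 → ℝ // v ⬝ᵥ v = 1 ∧ ∃ g : G, g ≠ 1 ∧ mat G g *ᵥ v = v}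

instance : MulAction G (Pole G) where
  smul g v := ⟨mat G g *ᵥ v.1, by rw [mulVec_dot (mat_orth G g)]; exact v.2.1, by
    obtain ⟨k, hk, hv⟩ := v.2.2
    refine ⟨g * k * g⁻¹, fun e => hk (conj_eq_one_iff.mp e), ?_⟩
    rw [mulVec_mulVec, ← mat_mul, inv_mul_cancel_right, mat_mul, ← mulVec_mulVec, hv]⟩
  one_smul v := Subtype.ext (by
    change mat G 1 *ᵥ v.1 = v.1
    rw [mat_one, one_mulVec])
  mul_smul g k v := Subtype.ext (by
    change mat G (g * k) *ᵥ v.1 = mat G g *ᵥ (mat G k *ᵥ v.1)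
    rw [mat_mul, mulVec_mulVec])

lemma smul_val (g : G) (v : Pole G) : (g • v).1 = mat G g *ᵥ v.1 := rfl

/-- antipode -/
def antip (v : Pole G) : Pole G :=
  ⟨-v.1, by rw [neg_dotProduct_neg]; exact v.2.1, by
    obtain ⟨k, hk, hv⟩ := v.2.2
    exact ⟨k, hk, by rw [mulVec_neg, hv]⟩⟩

lemma poleAct (hdet : ∀ g ∈ G, Matrix.det (g : Matrix (Fin 3) (Fin 3) ℝ) = 1) [Finite G] :
    PoleAct G (Pole G) (antip G) where
  fix := by
    intro g hg
    have hd : (mat G g).det = 1 := hdet g.1 g.2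
    obtain ⟨v, hv, fv⟩ := exists_fixed (mat_orth G g) hd
    refine ⟨⟨v, hv, g, hg, fv⟩, fun x => ⟨fun hx => ?_, ?_⟩⟩
    · have hne : mat G g ≠ 1 := fun e => hg (mat_inj G e)
      rcases fixed_unique (mat_orth G g) hd hne hv x.2.1 fv (congrArg Subtype.val hx) with e | e
      · exact Or.inl (Subtype.ext e)
      · exact Or.inr (Subtype.ext e)
    · rintro (rfl | rfl)
      · exact Subtype.ext fv
      · apply Subtype.ext
        change mat G g *ᵥ (-v) = -v
        rw [mulVec_neg, fv]
  ne := by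
    intro p e
    have h1 : -p.1 = p.1 := congrArg Subtype.val e
    have h2 := p.2.1
    have h3 : p.1 ⬝ᵥ (-p.1) = 1 := by rw [h1]; exact h2
    rw [dotProduct_neg, h2] at h3
    norm_num at h3
  nn := fun p => Subtype.ext (neg_neg p.1)
  sm := fun g p => Subtype.ext (by
    change mat G g *ᵥ (-p.1) = -(mat G g *ᵥ p.1)
    rw [mulVec_neg])
  nt := by
    intro p
    obtain ⟨k, hk, hv⟩ := p.2.2
    exact ⟨k, hk, Subtype.ext hv⟩
  cyc := by
    intro p
    have hp := p.2.1
    obtain ⟨u, hu, hpu⟩ := exists_perp p.1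
    let S := MulAction.stabilizer G p
    have fS : ∀ g : S, mat G g.1 *ᵥ p.1 = p.1 := fun g => congrArg Subtype.val g.2
    let f : S →* ℂ :=
      { toFun := fun g => rot p.1 u (mat G g.1)
        map_one' := rot_one hu
        map_mul' := fun g k => rot_mul hp hu hpu (mat_orth G g.1) (hdet _ g.1.2) (fS g)
          (mat_orth G k.1) (fS k) }
    refine isCyclic_of_injective_ringHom f ?_
    intro g k hgk
    have h1 : f (g * k⁻¹) = 1 := by
      rw [map_mul, hgk, ← map_mul, mul_inv_cancel, map_one]
    have h2 : mat G (g * k⁻¹).1 = 1 :=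
      rot_inj hp hu hpu (mat_orth G _) (hdet _ (g * k⁻¹).1.2) (fS _) h1
    have h3 : g * k⁻¹ = 1 := Subtype.ext (mat_inj G h2)
    exact mul_inv_eq_one.mp h3

end
end SO3


/-- Classification of finite subgroups of `SO(3, ℝ)` (realized as the subgroups `G` of the
orthogonal group `O(3, ℝ)` all of whose elements have determinant `1`): every such finite
group is isomorphic to a cyclic group `ℤ/nℤ` (`n ≥ 1`), a dihedral group of order `2n`
(`n ≥ 2`), the tetrahedral group `A₄`, the cube/octahedral group `S₄`, or the
icosahedral/dodecahedral group `A₅`. -/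
theorem finite_subgroup_so3_classification
    (G : Subgroup (Matrix.orthogonalGroup (Fin 3) ℝ)) (hG : Finite G)
    (hdet : ∀ g ∈ G, Matrix.det (g : Matrix (Fin 3) (Fin 3) ℝ) = 1) :
    (∃ n : ℕ, 1 ≤ n ∧ Nonempty (G ≃* Multiplicative (ZMod n))) ∨
    (∃ n : ℕ, 2 ≤ n ∧ Nonempty (G ≃* DihedralGroup n)) ∨
    Nonempty (G ≃* alternatingGroup (Fin 4)) ∨
    Nonempty (G ≃* Equiv.Perm (Fin 4)) ∨
    Nonempty (G ≃* alternatingGroup (Fin 5)) := by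
  exact (SO3.poleAct G hdet).main
end

section
/- Every finite subgroup of PGL(2, ℂ) = GL(2, ℂ)/Z, where Z is the center of GL(2, ℂ) (the nonzero scalar matrices), is isomorphic as an abstract group to one of: a cyclic group ℤ/nℤ for some n ≥ 1, a dihedral group of order 2n for some n ≥ 2, the alternating group A₄, the symmetric group S₄, or the alternating group A₅. -/
namespace PGLClass

open Subgroup

theorem ord_coe {G : Type*} [Group G] {H : Subgroup G} {u : H} {q : ℕ} (h : orderOf u = q) :
    orderOf u.1 = q := (Subgroup.orderOf_coe u).trans h

/-- If arithmetic forces `q` to divide the order of the kernel of `N(P) → Aut P`, then an element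
of order `q` centralizes `P`. -/
theorem exists_centralizing {G : Type*} [Group G] [Finite G] (P : Subgroup G) (q : ℕ)
    [hq : Fact q.Prime]
    (h : ∀ k r : ℕ, k * r = Nat.card (normalizer (P : Set G)) → r ∣ (Nat.card P).factorial → q ∣ k) :
    ∃ s : G, orderOf s = q ∧ ∀ x ∈ P, Commute s x := by
  classical
  let φ := P.normalizerMonoidHom
  have h1 : Nat.card φ.ker * Nat.card φ.range = Nat.card (normalizer (P : Set G)) := by
    rw [← Subgroup.card_mul_index φ.ker, Subgroup.index_ker]
  have h2 : Nat.card φ.range ∣ (Nat.card P).factorial := by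
    have := Subgroup.card_dvd_of_injective ((MulAut.toPerm P).comp φ.range.subtype)
      (by
        intro a b hab
        apply Subtype.ext
        apply MulEquiv.ext
        intro x
        exact congrArg (fun e : Equiv.Perm P => e x) hab)
    rwa [Nat.card_perm] at this
  have h3 := h _ _ h1 h2
  obtain ⟨s, hs⟩ := exists_prime_orderOf_dvd_card' q h3
  refine ⟨s.1.1, ?_, ?_⟩
  · exact (ord_coe (u := s.1) (ord_coe hs))
  · intro x hx
    have hk := s.2
    have hk' : s.1 ∈ (centralizer (P : Set G)).subgroupOf (normalizer (P : Set G)) :=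
      P.normalizerMonoidHom_ker ▸ hk
    rw [Subgroup.mem_subgroupOf, mem_centralizer_iff] at hk'
    exact (hk' x hx).symm

theorem commute_order {G : Type*} [Group G] {s t : G} (h : Commute s t) {p q : ℕ}
    (hs : orderOf s = p) (ht : orderOf t = q) (hpq : Nat.Coprime p q) : orderOf (s * t) = p * q := by
  rw [h.orderOf_mul_eq_mul_orderOf_of_coprime (by rwa [hs, ht]), hs, ht]

theorem mem_sylow_of_mem_ker {G : Type*} [Group G] [Finite G] {p : ℕ} [Fact p.Prime] {g : G}
    (hg : g ∈ (MulAction.toPermHom G (Sylow p G)).ker) (hp : orderOf g = p) (P : Sylow p G) :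
    g ∈ P := by
  have h1 : g ∈ normalizer (P : Set G) := by
    rw [← Sylow.smul_eq_iff_mem_normalizer]
    exact congrArg (fun e : Equiv.Perm (Sylow p G) => e P) hg
  have h2 : IsPGroup p (zpowers g) := by
    apply IsPGroup.of_card (n := 1)
    rw [Nat.card_zpowers, hp, pow_one]
  have h3 := h2.inf_normalizer_sylow P
  have h4 : g ∈ zpowers g ⊓ normalizer (P : Set G) := ⟨mem_zpowers g, h1⟩
  have h5 : g ∈ zpowers g ⊓ (P : Subgroup G) := h3 ▸ h4
  exact h5.2

theorem ker_dvd {G : Type*} [Group G] [Finite G] {p : ℕ} (P : Sylow p G) :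
    Nat.card (MulAction.toPermHom G (Sylow p G)).ker ∣ Nat.card (normalizer (P : Set G)) := by
  apply Subgroup.card_dvd_of_le
  intro g hg
  rw [← Sylow.smul_eq_iff_mem_normalizer]
  exact congrArg (fun e : Equiv.Perm (Sylow p G) => e P) hg

theorem sylow_mul {G : Type*} [Group G] [Finite G] {p : ℕ} [Fact p.Prime] (P : Sylow p G) :
    Nat.card (Sylow p G) * Nat.card (normalizer (P : Set G)) = Nat.card G := by
  rw [P.card_eq_index_normalizer, Subgroup.index_mul_card]

theorem exists_perm_hom {G : Type*} [Group G] [Finite G] {p n : ℕ} (hn : Nat.card (Sylow p G) = n)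
    (hk : Nat.card (MulAction.toPermHom G (Sylow p G)).ker = 1) :
    ∃ f : G →* Equiv.Perm (Fin n), Function.Injective f := by
  have e : Sylow p G ≃ Fin n := Finite.equivFinOfCardEq hn
  refine ⟨e.permCongrHom.toMonoidHom.comp (MulAction.toPermHom G (Sylow p G)), ?_⟩
  have : Function.Injective (MulAction.toPermHom G (Sylow p G)) := by
    rw [← MonoidHom.ker_eq_bot_iff]
    exact Subgroup.card_eq_one.mp hk
  exact e.permCongrHom.injective.comp this

/-- Groups of order `12` or `24` without elements of order `6` embed in `S₄`. -/
theorem embed_S4 {G : Type*} [Group G] [Finite G]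
    (hN : Nat.card G = 12 ∨ Nat.card G = 24) (h6 : ∀ g : G, orderOf g ≠ 6) :
    ∃ f : G →* Equiv.Perm (Fin 4), Function.Injective f := by
  classical
  have : Fact (Nat.Prime 3) := ⟨by norm_num⟩
  have : Fact (Nat.Prime 2) := ⟨by norm_num⟩
  obtain ⟨P⟩ : Nonempty (Sylow 3 G) := inferInstance
  have hall : ∀ P : Sylow 3 G, Nat.card P = 3 := by
    intro P
    rw [P.card_eq_multiplicity]
    rcases hN with h | h <;> rw [h]
    · rw [show (12 : ℕ) = 3 ^ 1 * 4 by norm_num, Nat.factorization_mul (by norm_num) (by norm_num)]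
      simp [Nat.factorization_eq_zero_of_not_dvd (show ¬ 3 ∣ 4 by norm_num),
        Nat.Prime.factorization_self (show Nat.Prime 3 by norm_num)]
    · rw [show (24 : ℕ) = 3 ^ 1 * 8 by norm_num, Nat.factorization_mul (by norm_num) (by norm_num)]
      simp [Nat.factorization_eq_zero_of_not_dvd (show ¬ 3 ∣ 8 by norm_num),
        Nat.Prime.factorization_self (show Nat.Prime 3 by norm_num)]
  have hmul := sylow_mul P
  have hmod := card_sylow_modEq_one 3 G
  have hdvd := P.card_dvd_index
  have hidx := Subgroup.card_mul_index (P : Subgroup G)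
  have hP3 : Nat.card (P : Subgroup G) = 3 := hall P
  rw [hP3] at hidx
  have hn1 : Nat.card (Sylow 3 G) ≠ 1 := by
    intro h1
    rw [h1, one_mul] at hmul
    obtain ⟨s, hs, hc⟩ := exists_centralizing (P : Subgroup G) 2 (by
      intro k r hkr hr
      rw [hP3] at hr
      have hr' : r ∣ 6 := hr
      have hkr' : k * r = Nat.card G := hkr.trans hmul
      have : r ≤ 6 := Nat.le_of_dvd (by norm_num) hr'
      rcases hN with h | h <;> rw [h] at hkr' <;> interval_cases r <;> omega)
    obtain ⟨u, hu⟩ := exists_prime_orderOf_dvd_card' (G := (P : Subgroup G)) 3 (by rw [hP3])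
    refine h6 (s * u.1) ?_
    exact commute_order (hc u.1 u.2) hs (ord_coe hu) (by norm_num)
  have hn4 : Nat.card (Sylow 3 G) = 4 := by
    have : (P : Subgroup G).index = 4 ∨ (P : Subgroup G).index = 8 := by omega
    have hle : Nat.card (Sylow 3 G) ≤ 8 := by
      rcases this with h | h <;> rw [h] at hdvd
      · exact (Nat.le_of_dvd (by norm_num) hdvd).trans (by norm_num)
      · exact Nat.le_of_dvd (by norm_num) hdvd
    have hm : Nat.card (Sylow 3 G) % 3 = 1 := hmod
    generalize Nat.card (Sylow 3 G) = n at *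
    interval_cases n <;> omega
  have h3 : ¬ 3 ∣ Nat.card (MulAction.toPermHom G (Sylow 3 G)).ker := by
    intro h
    obtain ⟨g, hg⟩ := exists_prime_orderOf_dvd_card' 3 h
    apply hn1
    rw [Nat.card_eq_one_iff_unique]
    refine ⟨⟨fun Q R => ?_⟩, ⟨P⟩⟩
    have key : ∀ Q : Sylow 3 G, (Q : Subgroup G) = zpowers g.1 := by
      intro Q
      symm
      apply Subgroup.eq_of_le_of_card_ge
      · rw [zpowers_le]
        exact mem_sylow_of_mem_ker g.2 (ord_coe hg) Q
      · rw [Nat.card_zpowers]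
        have : orderOf g.1 = 3 := ord_coe hg
        rw [this]
        exact (hall Q).le
    exact Sylow.ext ((key Q).trans (key R).symm)
  apply exists_perm_hom hn4
  have hk := ker_dvd P
  rw [hn4] at hmul
  have hc : Nat.card (normalizer (P : Set G)) = 3 ∨ Nat.card (normalizer (P : Set G)) = 6 := by omega
  have hle : Nat.card (MulAction.toPermHom G (Sylow 3 G)).ker ≤ 6 := by
    rcases hc with h | h <;> rw [h] at hk
    · exact (Nat.le_of_dvd (by norm_num) hk).trans (by norm_num)
    · exact Nat.le_of_dvd (by norm_num) hk
  have h2 : Nat.card (MulAction.toPermHom G (Sylow 3 G)).ker ≠ 2 := by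
    intro h2
    obtain ⟨s, hs, hc⟩ := exists_centralizing (MulAction.toPermHom G (Sylow 3 G)).ker 3 (by
      intro k r hkr hr
      rw [h2] at hr
      have hr' : r ∣ 2 := hr
      rw [Subgroup.normalizer_eq_top, Subgroup.card_top] at hkr
      have : r ≤ 2 := Nat.le_of_dvd (by norm_num) hr'
      rcases hN with h | h <;> rw [h] at hkr <;> interval_cases r <;> omega)
    obtain ⟨u, hu⟩ := exists_prime_orderOf_dvd_card'
      (G := (MulAction.toPermHom G (Sylow 3 G)).ker) 2 (by rw [h2])
    refine h6 (s * u.1) ?_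
    exact commute_order (hc u.1 u.2) hs (ord_coe hu) (by norm_num)
  have hpos : 0 < Nat.card (MulAction.toPermHom G (Sylow 3 G)).ker := Nat.card_pos
  generalize Nat.card (MulAction.toPermHom G (Sylow 3 G)).ker = n at *
  interval_cases n <;> omega

theorem alternating_of_injective {G : Type*} [Group G] [Finite G] {n : ℕ} (hn : 0 < Nat.card G)
    (hN : Nat.card G * 2 = n.factorial) (f : G →* Equiv.Perm (Fin n)) (hf : Function.Injective f) :
    Nonempty (G ≃* alternatingGroup (Fin n)) := by
  have hc : Nat.card f.range = Nat.card G := Nat.card_congr (f.ofInjective hf).symm.toEquiv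
  have h := Subgroup.card_mul_index f.range
  rw [Nat.card_perm, Nat.card_fin, hc, ← hN] at h
  have h2 : f.range.index = 2 := Nat.eq_of_mul_eq_mul_left hn h
  have h3 := Equiv.Perm.eq_alternatingGroup_of_index_eq_two h2
  exact ⟨(f.ofInjective hf).trans (MulEquiv.subgroupCongr h3)⟩

theorem case12 {G : Type*} [Group G] [Finite G] (hN : Nat.card G = 12)
    (h6 : ∀ g : G, orderOf g ≠ 6) : Nonempty (G ≃* alternatingGroup (Fin 4)) := by
  obtain ⟨f, hf⟩ := embed_S4 (Or.inl hN) h6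
  exact alternating_of_injective (by omega) (by rw [hN]; rfl) f hf

theorem case24 {G : Type*} [Group G] [Finite G] (hN : Nat.card G = 24)
    (h6 : ∀ g : G, orderOf g ≠ 6) : Nonempty (G ≃* Equiv.Perm (Fin 4)) := by
  obtain ⟨f, hf⟩ := embed_S4 (Or.inr hN) h6
  refine ⟨MulEquiv.ofBijective f ?_⟩
  rw [Nat.bijective_iff_injective_and_card]
  refine ⟨hf, ?_⟩
  rw [hN, Nat.card_perm, Nat.card_fin]; rfl

theorem case60 {G : Type*} [Group G] [Finite G] (hN : Nat.card G = 60)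
    (ho : ∀ g : G, orderOf g = 1 ∨ orderOf g = 2 ∨ orderOf g = 3 ∨ orderOf g = 5)
    (hconj : ∀ s t : G, orderOf s = 2 → orderOf t = 2 → IsConj s t) :
    Nonempty (G ≃* alternatingGroup (Fin 5)) := by
  classical
  have : Fact (Nat.Prime 3) := ⟨by norm_num⟩
  have : Fact (Nat.Prime 2) := ⟨by norm_num⟩
  have : Fact (Nat.Prime 5) := ⟨by norm_num⟩
  obtain ⟨P⟩ : Nonempty (Sylow 2 G) := inferInstance
  have hall : ∀ P : Sylow 2 G, Nat.card P = 4 := by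
    intro P
    rw [P.card_eq_multiplicity, hN]
    rw [show (60 : ℕ) = 2 ^ 2 * 15 by norm_num, Nat.factorization_mul (by norm_num) (by norm_num),
      Nat.factorization_pow, Finsupp.add_apply, Finsupp.smul_apply,
      Nat.factorization_eq_zero_of_not_dvd (show ¬ 2 ∣ 15 by norm_num),
      Nat.Prime.factorization_self (show Nat.Prime 2 by norm_num)]
    norm_num
  have hP4 : Nat.card (P : Subgroup G) = 4 := hall P
  have hmul := sylow_mul P
  have hdvd := P.card_dvd_index
  have hidx := Subgroup.card_mul_index (P : Subgroup G)
  rw [hP4, hN] at hidx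
  have hidx' : (P : Subgroup G).index = 15 := by omega
  rw [hidx'] at hdvd
  rw [hN] at hmul
  -- centralizers of involutions
  have hcent : ∀ Q : Sylow 2 G, ∀ t ∈ Q, t ≠ 1 → centralizer {t} = (Q : Subgroup G) := by
    intro Q t ht ht1
    have hcomm : ∀ a b : Q, a * b = b * a := by
      have := IsPGroup.isMulCommutative_of_card_eq_prime_sq (p := 2) (G := Q) (by rw [hall Q]; rfl)
      exact fun a b => this.is_comm.comm a b
    have h2 : orderOf t = 2 := by
      obtain ⟨k, hk⟩ := (IsPGroup.iff_orderOf.mp Q.2) ⟨t, ht⟩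
      rw [Subgroup.orderOf_mk] at hk
      rcases ho t with h | h | h | h
      · exact absurd (orderOf_eq_one_iff.mp h) ht1
      · exact h
      · exfalso
        have : 3 ∣ 2 ^ k := by rw [← hk, h]
        have := (Nat.Prime.dvd_of_dvd_pow (by norm_num) this)
        omega
      · exfalso
        have : 5 ∣ 2 ^ k := by rw [← hk, h]
        have := (Nat.Prime.dvd_of_dvd_pow (by norm_num) this)
        omega
    apply Q.is_maximal'
    · rw [IsPGroup.iff_orderOf]
      rintro ⟨s, hs⟩
      rw [Subgroup.orderOf_mk]
      have hst : Commute s t := by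
        rw [mem_centralizer_singleton_iff] at hs
        exact hs
      rcases ho s with h | h | h | h
      · exact ⟨0, h⟩
      · exact ⟨1, h⟩
      · exfalso
        have := ho (s * t)
        rw [commute_order hst h h2 (by norm_num)] at this
        omega
      · exfalso
        have := ho (s * t)
        rw [commute_order hst h h2 (by norm_num)] at this
        omega
    · intro s hs
      rw [mem_centralizer_singleton_iff]
      exact congrArg Subtype.val (hcomm ⟨s, hs⟩ ⟨t, ht⟩)
  have hne5 : ¬ 5 ∣ Nat.card (normalizer (P : Set G)) := by
    intro h5
    have hd : Nat.card (normalizer (P : Set G)) ∣ 60 := ⟨_, by rw [mul_comm]; exact hmul.symm⟩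
    obtain ⟨s, hs, hc⟩ := exists_centralizing (P : Subgroup G) 5 (by
      intro k r hkr hr
      rw [hP4] at hr
      have hr' : r ∣ 24 := hr
      have h5' : 5 ∣ k * r := by rw [hkr]; exact h5
      rcases (Nat.Prime.dvd_mul (by norm_num)).mp h5' with h | h
      · exact h
      · have := h.trans hr'
        omega)
    obtain ⟨u, hu⟩ := exists_prime_orderOf_dvd_card' (G := (P : Subgroup G)) 2 (by rw [hP4]; norm_num)
    have := ho (s * u.1)
    rw [commute_order (hc u.1 u.2) hs (ord_coe hu) (by norm_num)] at this
    omega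
  have hne15 : Nat.card (Sylow 2 G) ≠ 15 := by
    intro h15
    have hn4 : Nat.card (normalizer (P : Set G)) = 4 := by rw [h15] at hmul; omega
    have hPN : (P : Subgroup G) = normalizer (P : Set G) :=
      Subgroup.eq_of_le_of_card_ge le_normalizer (by rw [hn4, hP4])
    obtain ⟨t, ht⟩ := exists_prime_orderOf_dvd_card' (G := (P : Subgroup G)) 2 (by rw [hP4]; norm_num)
    have ht1 : t ≠ 1 := by rintro rfl; simp at ht
    obtain ⟨u, hu1, hut⟩ : ∃ u : (P : Subgroup G), u ≠ 1 ∧ u ≠ t := by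
      by_contra! hcon
      have := Fintype.ofFinite (P : Subgroup G)
      have : (Finset.univ : Finset (P : Subgroup G)) ⊆ {1, t} := by
        intro x _
        by_cases hx : x = 1
        · simp [hx]
        · simp [hcon x hx]
      have h := Finset.card_le_card this
      rw [Finset.card_univ, ← Nat.card_eq_fintype_card, hP4] at h
      have := Finset.card_le_two (a := (1 : (P : Subgroup G))) (b := t)
      omega
    have hot : orderOf t.1 = 2 := ord_coe ht
    have hcu := hcent P u.1 u.2 (by simpa using hu1)
    have hct := hcent P t.1 t.2 (by simpa using ht1)
    have hou : orderOf u.1 = 2 := by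
      obtain ⟨k, hk⟩ := (IsPGroup.iff_orderOf.mp P.2) u
      have hk' : orderOf u.1 = 2 ^ k := by rw [← hk]; simp
      rcases ho u.1 with h | h | h | h
      · exact absurd (orderOf_eq_one_iff.mp h) (by simpa using hu1)
      · exact h
      · exfalso
        have : 3 ∣ 2 ^ k := by rw [← hk', h]
        have := (Nat.Prime.dvd_of_dvd_pow (by norm_num) this)
        omega
      · exfalso
        have : 5 ∣ 2 ^ k := by rw [← hk', h]
        have := (Nat.Prime.dvd_of_dvd_pow (by norm_num) this)
        omega
    obtain ⟨g, hg⟩ := isConj_iff.mp (hconj t.1 u.1 hot hou)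
    have hgN : g ∈ normalizer (P : Set G) := by
      rw [← Sylow.smul_eq_iff_mem_normalizer]
      have hu' : u.1 ∈ g • P := by
        rw [Sylow.smul_def, ← hg]
        exact Subgroup.smul_mem_pointwise_smul t.1 (MulAut.conj g) (P : Subgroup G) t.2
      have := hcent (g • P) u.1 hu' (by simpa using hu1)
      exact Sylow.ext (this.symm.trans hcu)
    rw [← hPN] at hgN
    rw [← hct, mem_centralizer_singleton_iff] at hgN
    apply hut
    apply Subtype.ext
    rw [← hg, hgN]
    group
  have hn5 : Nat.card (Sylow 2 G) = 5 := by
    have : Nat.card (Sylow 2 G) ≤ 15 := Nat.le_of_dvd (by norm_num) hdvd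
    generalize Nat.card (Sylow 2 G) = n at *
    interval_cases n <;> omega
  have hn12 : Nat.card (normalizer (P : Set G)) = 12 := by rw [hn5] at hmul; omega
  have h2 : ¬ 2 ∣ Nat.card (MulAction.toPermHom G (Sylow 2 G)).ker := by
    intro h
    obtain ⟨g, hg⟩ := exists_prime_orderOf_dvd_card' 2 h
    have hg' : orderOf g.1 = 2 := ord_coe hg
    have hg1 : g.1 ≠ 1 := by intro h; rw [h] at hg'; simp at hg'
    have : Nat.card (Sylow 2 G) = 1 := by
      rw [Nat.card_eq_one_iff_unique]
      refine ⟨⟨fun Q R => ?_⟩, ⟨P⟩⟩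
      have key : ∀ Q : Sylow 2 G, centralizer {g.1} = (Q : Subgroup G) := fun Q =>
        hcent Q g.1 (mem_sylow_of_mem_ker g.2 hg' Q) hg1
      exact Sylow.ext ((key Q).symm.trans (key R))
    omega
  have hk := ker_dvd P
  rw [hn12] at hk
  have hk3 : Nat.card (MulAction.toPermHom G (Sylow 2 G)).ker ≠ 3 := by
    intro h3
    obtain ⟨s, hs, hc⟩ := exists_centralizing (MulAction.toPermHom G (Sylow 2 G)).ker 5 (by
      intro k r hkr hr
      rw [h3] at hr
      have hr' : r ∣ 6 := hr
      rw [Subgroup.normalizer_eq_top, Subgroup.card_top, hN] at hkr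
      have : r ≤ 6 := Nat.le_of_dvd (by norm_num) hr'
      interval_cases r <;> omega)
    obtain ⟨u, hu⟩ := exists_prime_orderOf_dvd_card'
      (G := (MulAction.toPermHom G (Sylow 2 G)).ker) 3 (by rw [h3])
    have := ho (s * u.1)
    rw [commute_order (hc u.1 u.2) hs (ord_coe hu) (by norm_num)] at this
    omega
  have hk1 : Nat.card (MulAction.toPermHom G (Sylow 2 G)).ker = 1 := by
    have hle := Nat.le_of_dvd (by norm_num) hk
    generalize Nat.card (MulAction.toPermHom G (Sylow 2 G)).ker = n at *
    interval_cases n <;> omega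
  obtain ⟨f, hf⟩ := exists_perm_hom hn5 hk1
  exact alternating_of_injective (by omega) (by rw [hN]; rfl) f hf

/-- A group with a cyclic subgroup of index two outside of which all squares are trivial. -/
theorem dihedral_of_index_two {G : Type*} [Group G] [Finite G] (C : Subgroup G) [IsCyclic C]
    (hi : C.index = 2) (hs : ∀ g, g ∉ C → g * g = 1) :
    Nonempty (G ≃* DihedralGroup (Nat.card C)) := by
  obtain ⟨⟨ρ, hρ⟩, hgen⟩ := IsCyclic.exists_generator (α := C)
  have hgen' : ∀ g ∈ C, ∃ k : ℤ, ρ ^ k = g := by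
    intro g hg
    obtain ⟨k, hk⟩ := hgen ⟨g, hg⟩
    exact ⟨k, congrArg Subtype.val hk⟩
  have hord : orderOf ρ = Nat.card C := by
    rw [← orderOf_eq_card_of_forall_mem_zpowers hgen]; simp
  set n := Nat.card C with hn
  have hnpos : 0 < n := Nat.card_pos
  have : NeZero n := ⟨hnpos.ne'⟩
  obtain ⟨s, hsC⟩ : ∃ s, s ∉ C := by
    by_contra! h
    have : C = ⊤ := by ext; simp [h]
    rw [this] at hi; simp at hi
  have hss := hs s hsC
  have hinv : ∀ k : ℤ, s * ρ ^ k * s = ρ ^ (-k) := by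
    intro k
    have h1 : s * ρ ^ k ∉ C := by
      intro h
      exact hsC ((C.mul_mem_cancel_right (C.zpow_mem hρ k)).mp h)
    have h2 := hs _ h1
    rw [zpow_neg, eq_inv_iff_mul_eq_one]
    simpa [mul_assoc] using h2
  let e : ZMod n → G := fun i => ρ ^ (i.val : ℤ)
  have he : ∀ k : ℤ, e (k : ZMod n) = ρ ^ k := by
    intro k
    simp only [e]
    rw [zpow_eq_zpow_iff_modEq, hord, ← ZMod.intCast_eq_intCast_iff]
    simp
  have hadd : ∀ i j : ZMod n, e (i + j) = e i * e j := by
    intro i j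
    obtain ⟨a, rfl⟩ := ZMod.intCast_surjective i
    obtain ⟨b, rfl⟩ := ZMod.intCast_surjective j
    rw [← Int.cast_add, he, he, he, zpow_add]
  have hneg : ∀ i : ZMod n, s * e i * s = e (-i) := by
    intro i
    obtain ⟨a, rfl⟩ := ZMod.intCast_surjective i
    rw [← Int.cast_neg, he, he, hinv]
  have hneg' : ∀ i : ZMod n, e i * s = s * e (-i) := by
    intro i
    rw [← hneg, ← mul_assoc, ← mul_assoc, hss, one_mul]
  have hC : ∀ i, e i ∈ C := fun i => C.zpow_mem hρ _
  have hinj : ∀ i j, e i = e j → i = j := by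
    intro i j h
    obtain ⟨a, rfl⟩ := ZMod.intCast_surjective i
    obtain ⟨b, rfl⟩ := ZMod.intCast_surjective j
    rw [he, he, zpow_eq_zpow_iff_modEq, hord, ← ZMod.intCast_eq_intCast_iff] at h
    exact h
  let F : DihedralGroup n →* G := MonoidHom.mk' (fun x => match x with
    | DihedralGroup.r i => e i
    | DihedralGroup.sr i => s * e i) (by
      rintro (i | i) (j | j)
      · simp [hadd]
      · simp only [DihedralGroup.r_mul_sr]
        rw [← mul_assoc, hneg', mul_assoc, ← hadd]
        congr 2; ring
      · simp only [DihedralGroup.sr_mul_r]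
        rw [hadd, mul_assoc]
      · simp only [DihedralGroup.sr_mul_sr]
        rw [← mul_assoc, hneg, ← hadd]
        congr 1; ring)
  refine ⟨(MulEquiv.ofBijective F ?_).symm⟩
  rw [Nat.bijective_iff_injective_and_card]
  constructor
  · rintro (i | i) (j | j) h
    · exact congrArg _ (hinj i j h)
    · exfalso
      have h' : e i = s * e j := h
      exact hsC ((C.mul_mem_cancel_right (hC j)).mp (h' ▸ hC i))
    · exfalso
      have h' : s * e i = e j := h
      exact hsC ((C.mul_mem_cancel_right (hC i)).mp (h' ▸ hC j))
    · have h' : s * e i = s * e j := h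
      exact congrArg _ (hinj i j (mul_left_cancel h'))
  · rw [DihedralGroup.nat_card, ← Subgroup.card_mul_index C, hi, mul_comm]

end PGLClass
namespace PGLClass

open Subgroup MulAction

/-- The counting lemma for the point stabilizers. -/
theorem orbit_data {G X : Type*} [Group G] [Finite G] [MulAction G X]
    (h2 : ∀ g : G, g ≠ 1 → (fixedBy X g).ncard = 2) (hc : ∀ x : X, IsCyclic (stabilizer G x)) :
    ∃ (r : ℕ) (H : Fin r → Subgroup G), (∀ i, IsCyclic (H i)) ∧ (∀ i, 2 ≤ Nat.card (H i)) ∧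
      (∀ g : G, g ≠ 1 → ∃ i, ∃ a : G, a * g * a⁻¹ ∈ H i) ∧
      2 * (Nat.card G - 1) + ∑ i, (H i).index = r * Nat.card G := by
  classical
  have := Fintype.ofFinite G
  let S : SubMulAction G X :=
    { carrier := {x | ∃ g : G, g ≠ 1 ∧ g • x = x}
      smul_mem' := by
        rintro c x ⟨g, hg, hx⟩
        refine ⟨c * g * c⁻¹, ?_, ?_⟩
        · intro h
          apply hg
          have : c * g = c := by simpa [mul_inv_eq_one] using h
          simpa using this
        · rw [smul_smul, inv_mul_cancel_right, mul_smul, hx] }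
  have hSset : (S : Set X) = ⋃ g : {g : G // g ≠ 1}, fixedBy X g.1 := by
    ext x
    simp only [Set.mem_iUnion]
    constructor
    · rintro ⟨g, hg, hx⟩; exact ⟨⟨g, hg⟩, hx⟩
    · rintro ⟨⟨g, hg⟩, hx⟩; exact ⟨g, hg, hx⟩
  have hfin : Finite S := by
    have : (S : Set X).Finite := by
      rw [hSset]
      apply Set.finite_iUnion
      intro g
      apply Set.finite_of_ncard_ne_zero
      rw [h2 g.1 g.2]; norm_num
    exact this
  have := Fintype.ofFinite S
  have hB := sum_card_fixedBy_eq_card_orbits_mul_card_group G S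
  have hfix : ∀ g : G, g ≠ 1 → Fintype.card (fixedBy S g) = 2 := by
    intro g hg
    rw [← Nat.card_eq_fintype_card, ← h2 g hg, ← Nat.card_coe_set_eq]
    refine Nat.card_congr ⟨fun x => ⟨x.1.1, congrArg Subtype.val x.2⟩,
      fun x => ⟨⟨x.1, ⟨g, hg, x.2⟩⟩, Subtype.ext x.2⟩, fun _ => rfl, fun _ => rfl⟩
  have hone : Fintype.card (fixedBy S (1 : G)) = Fintype.card S := by
    apply Fintype.card_congr
    exact ⟨fun x => x.1, fun x => ⟨x, one_smul _ _⟩, fun _ => rfl, fun _ => rfl⟩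
  rw [← Finset.add_sum_erase _ _ (Finset.mem_univ (1 : G)), hone,
    Finset.sum_congr rfl (g := fun _ => 2) (fun g hg => hfix g (Finset.ne_of_mem_erase hg)),
    Finset.sum_const, Finset.card_erase_of_mem (Finset.mem_univ _), Finset.card_univ] at hB
  let Ω := Quotient (orbitRel G S)
  have hΩ : Fintype.card S = ∑ ω : Ω, (stabilizer G (Quotient.out ω)).index := by
    rw [Fintype.card_congr (selfEquivSigmaOrbitsQuotientStabilizer G S), Fintype.card_sigma]
    apply Finset.sum_congr rfl
    intro ω _
    rw [Subgroup.index, Nat.card_eq_fintype_card]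
  have hstab : ∀ x : S, stabilizer G x = stabilizer G x.1 := by
    intro x
    ext g
    simp only [mem_stabilizer_iff]
    exact ⟨fun h => congrArg Subtype.val h, fun h => Subtype.ext h⟩
  let e := Fintype.equivFin Ω
  refine ⟨Fintype.card Ω, fun i => stabilizer G (Quotient.out (e.symm i)), ?_, ?_, ?_, ?_⟩
  · intro i
    change IsCyclic (stabilizer G (Quotient.out (e.symm i)))
    rw [hstab]
    exact hc _
  · intro i
    obtain ⟨g, hg, hx⟩ := (Quotient.out (e.symm i)).2
    have hnt : Nontrivial (stabilizer G (Quotient.out (e.symm i))) :=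
      ⟨⟨⟨g, Subtype.ext hx⟩, 1, fun h => hg (congrArg Subtype.val h)⟩⟩
    exact Finite.one_lt_card
  · intro g hg
    obtain ⟨x, hx⟩ : (fixedBy X g).Nonempty := by
      apply Set.nonempty_of_ncard_ne_zero
      rw [h2 g hg]; norm_num
    let y : S := ⟨x, g, hg, hx⟩
    have hgy : g • y = y := Subtype.ext hx
    refine ⟨e (Quotient.mk _ y), ?_⟩
    simp only [Equiv.symm_apply_apply]
    have hrel : (orbitRel G S) (Quotient.out (Quotient.mk (orbitRel G S) y)) y :=
      Quotient.exact (Quotient.out_eq _)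
    obtain ⟨a, ha⟩ := orbitRel_apply.mp hrel
    refine ⟨a, ?_⟩
    rw [mem_stabilizer_iff, ← ha]
    simp only []
    rw [smul_smul, inv_mul_cancel_right, mul_smul, hgy]
  · rw [Nat.card_eq_fintype_card]
    have : ∑ i, (stabilizer G (Quotient.out (e.symm i))).index =
        ∑ ω : Ω, (stabilizer G (Quotient.out ω)).index :=
      Equiv.sum_comp e.symm (fun ω : Ω => (stabilizer G (Quotient.out ω)).index)
    rw [this, ← hΩ]
    simp only [smul_eq_mul] at hB
    have hB' : Fintype.card S + (Fintype.card G - 1) * 2 = Fintype.card Ω * Fintype.card G := by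
      convert hB
    omega

theorem arith_three {N a b c x y z : ℕ} (hN : 0 < N) (ha : 2 ≤ a) (hab : a ≤ b) (hbc : b ≤ c)
    (hx : a * x = N) (hy : b * y = N) (hz : c * z = N) (hs : x + y + z = N + 2) :
    (a = 2 ∧ b = 2 ∧ z = 2) ∨ (a = 2 ∧ b = 3 ∧ c = 3 ∧ N = 12) ∨
    (a = 2 ∧ b = 3 ∧ c = 4 ∧ N = 24) ∨ (a = 2 ∧ b = 3 ∧ c = 5 ∧ N = 60) := by
  have ha2 : a = 2 := by
    by_contra h
    have h1 : 3 * x ≤ a * x := Nat.mul_le_mul_right _ (by omega)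
    have h2 : 3 * y ≤ b * y := Nat.mul_le_mul_right _ (by omega)
    have h3 : 3 * z ≤ c * z := Nat.mul_le_mul_right _ (by omega)
    omega
  subst ha2
  have hb : b < 4 := by
    by_contra h
    have h2 : 4 * y ≤ b * y := Nat.mul_le_mul_right _ (by omega)
    have h3 : 4 * z ≤ c * z := Nat.mul_le_mul_right _ (by omega)
    omega
  interval_cases b
  · left; omega
  · have hc : c < 6 := by
      by_contra h
      have h3 : 6 * z ≤ c * z := Nat.mul_le_mul_right _ (by omega)
      omega
    interval_cases c <;> omega

/-- The conclusion of the classification. -/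
def Concl (G : Type*) [Group G] : Prop :=
    (∃ n : ℕ, 1 ≤ n ∧ Nonempty (G ≃* Multiplicative (ZMod n))) ∨
    (∃ n : ℕ, 2 ≤ n ∧ Nonempty (G ≃* DihedralGroup n)) ∨
    Nonempty (G ≃* alternatingGroup (Fin 4)) ∨
    Nonempty (G ≃* Equiv.Perm (Fin 4)) ∨
    Nonempty (G ≃* alternatingGroup (Fin 5))

theorem concl_of_cyclic {G : Type*} [Group G] [Finite G] [IsCyclic G] : Concl G :=
  Or.inl ⟨Nat.card G, Nat.card_pos, ⟨(zmodCyclicMulEquiv (G := G) inferInstance).symm⟩⟩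

theorem orderOf_conj' {G : Type*} [Group G] (a g : G) : orderOf (a * g * a⁻¹) = orderOf g := by
  have := orderOf_injective (MulAut.conj a).toMonoidHom (MulAut.conj a).injective g
  simpa using this

theorem orderOf_dvd_of_conj_mem {G : Type*} [Group G] {H : Subgroup G} {a g : G}
    (h : a * g * a⁻¹ ∈ H) : orderOf g ∣ Nat.card H := by
  rw [← orderOf_conj' a g]
  exact Subgroup.orderOf_dvd_natCard H h

theorem concl_three {G : Type*} [Group G] [Finite G] (A B C : Subgroup G) [IsCyclic C]
    (hN : 2 ≤ Nat.card G)
    (hA : 2 ≤ Nat.card A) (hAB : Nat.card A ≤ Nat.card B) (hBC : Nat.card B ≤ Nat.card C)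
    (hg : ∀ g : G, g ≠ 1 → ∃ a : G, a * g * a⁻¹ ∈ A ∨ a * g * a⁻¹ ∈ B ∨ a * g * a⁻¹ ∈ C)
    (hs : A.index + B.index + C.index = Nat.card G + 2) : Concl G := by
  have hord : ∀ g : G, orderOf g ∣ Nat.card A ∨ orderOf g ∣ Nat.card B ∨ orderOf g ∣ Nat.card C := by
    intro g
    by_cases h1 : g = 1
    · left; simp [h1]
    · obtain ⟨a, h | h | h⟩ := hg g h1
      · exact Or.inl (orderOf_dvd_of_conj_mem h)
      · exact Or.inr (Or.inl (orderOf_dvd_of_conj_mem h))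
      · exact Or.inr (Or.inr (orderOf_dvd_of_conj_mem h))
  rcases arith_three (by omega) hA hAB hBC A.card_mul_index B.card_mul_index C.card_mul_index hs with
    ⟨ha, hb, hz⟩ | ⟨ha, hb, hc, hN'⟩ | ⟨ha, hb, hc, hN'⟩ | ⟨ha, hb, hc, hN'⟩
  · right; left
    refine ⟨Nat.card C, by omega, dihedral_of_index_two C hz ?_⟩
    intro g hgC
    have hnorm : C.Normal := Subgroup.normal_of_index_eq_two hz
    have h1 : g ≠ 1 := by rintro rfl; exact hgC C.one_mem
    have key : orderOf g ∣ 2 := by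
      obtain ⟨a, h | h | h⟩ := hg g h1
      · exact ha ▸ orderOf_dvd_of_conj_mem h
      · exact hb ▸ orderOf_dvd_of_conj_mem h
      · exact absurd (by simpa [mul_assoc] using hnorm.conj_mem _ h a⁻¹) hgC
    rw [← pow_two]
    exact orderOf_dvd_iff_pow_eq_one.mp key
  · right; right; left
    refine case12 hN' fun g h6 => ?_
    have := hord g
    rw [ha, hb, hc, h6] at this
    omega
  · right; right; right; left
    refine case24 hN' fun g h6 => ?_
    have := hord g
    rw [ha, hb, hc, h6] at this
    omega
  · right; right; right; right
    have hinv : ∀ s t : G, orderOf s = 2 → orderOf t = 2 → IsConj s t := by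
      have step : ∀ s : G, orderOf s = 2 → ∃ a : G, a * s * a⁻¹ ∈ A := by
        intro s hs2
        have h1 : s ≠ 1 := by rintro rfl; simp at hs2
        obtain ⟨a, h | h | h⟩ := hg s h1
        · exact ⟨a, h⟩
        · have := orderOf_dvd_of_conj_mem h
          rw [hs2, hb] at this
          omega
        · have := orderOf_dvd_of_conj_mem h
          rw [hs2, hc] at this
          omega
      intro s t hs2 ht2
      obtain ⟨a, hs'⟩ := step s hs2
      obtain ⟨b, ht'⟩ := step t ht2
      have h1 : a * s * a⁻¹ ≠ 1 := by
        intro h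
        have := orderOf_conj' a s
        rw [h, hs2] at this; simp at this
      have h2 : b * t * b⁻¹ ≠ 1 := by
        intro h
        have := orderOf_conj' b t
        rw [h, ht2] at this; simp at this
      obtain ⟨u, v, huv, huniv⟩ := Nat.card_eq_two_iff.mp ha
      have heq : a * s * a⁻¹ = b * t * b⁻¹ := by
        have m1 : (⟨_, hs'⟩ : A) ∈ ({u, v} : Set A) := by rw [huniv]; trivial
        have m2 : (⟨_, ht'⟩ : A) ∈ ({u, v} : Set A) := by rw [huniv]; trivial
        have m3 : (1 : A) ∈ ({u, v} : Set A) := by rw [huniv]; trivial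
        have n1 : (⟨_, hs'⟩ : A) ≠ 1 := fun h => h1 (congrArg Subtype.val h)
        have n2 : (⟨_, ht'⟩ : A) ≠ 1 := fun h => h2 (congrArg Subtype.val h)
        have : (⟨_, hs'⟩ : A) = ⟨_, ht'⟩ := by
          simp only [Set.mem_insert_iff, Set.mem_singleton_iff] at m1 m2 m3
          grind
        exact congrArg Subtype.val this
      have c1 : IsConj s (a * s * a⁻¹) := isConj_iff.mpr ⟨a, rfl⟩
      have c2 : IsConj t (b * t * b⁻¹) := isConj_iff.mpr ⟨b, rfl⟩
      exact c1.trans (heq ▸ c2.symm)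
    refine case60 hN' (fun g => ?_) hinv
    have := hord g
    rw [ha, hb, hc] at this
    have p2 : Nat.Prime 2 := by norm_num
    have p3 : Nat.Prime 3 := by norm_num
    have p5 : Nat.Prime 5 := by norm_num
    rw [Nat.dvd_prime p2, Nat.dvd_prime p3, Nat.dvd_prime p5] at this
    tauto

theorem concl_of_action {G X : Type*} [Group G] [Finite G] [MulAction G X]
    (h2 : ∀ g : G, g ≠ 1 → (fixedBy X g).ncard = 2) (hc : ∀ x : X, IsCyclic (stabilizer G x)) :
    Concl G := by
  by_cases hN : Nat.card G = 1
  · have := (Nat.card_eq_one_iff_unique.mp hN).1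
    exact concl_of_cyclic
  have hpos : 0 < Nat.card G := Nat.card_pos
  have hN2 : 2 ≤ Nat.card G := by omega
  obtain ⟨r, H, hcyc, hcard, hconj, hsum⟩ := orbit_data h2 hc
  have hidx : ∀ i, 2 * (H i).index ≤ Nat.card G := by
    intro i
    rw [← (H i).card_mul_index]
    exact Nat.mul_le_mul_right _ (hcard i)
  have hipos : ∀ i, 0 < (H i).index := fun i => Nat.pos_of_ne_zero (H i).index_ne_zero_of_finite
  have hr : r < 4 := by
    by_contra h
    have h1 : 2 * ∑ i, (H i).index ≤ r * Nat.card G := by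
      rw [Finset.mul_sum]
      calc _ ≤ ∑ i : Fin r, Nat.card G := Finset.sum_le_sum fun i _ => hidx i
        _ = r * Nat.card G := by simp
    have h2 : 4 * Nat.card G ≤ r * Nat.card G := Nat.mul_le_mul_right _ (by omega)
    omega
  interval_cases r
  · rw [Fin.sum_univ_zero] at hsum; omega
  · have := hidx 0
    rw [Fin.sum_univ_one] at hsum
    have := hipos 0
    exfalso
    omega
  · have p0 := hipos 0
    have p1 := hipos 1
    rw [Fin.sum_univ_two] at hsum
    have h1 : (H 0).index = 1 := by omega
    have htop := Subgroup.index_eq_one.mp h1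
    have hcy := hcyc 0
    rw [htop] at hcy
    have : IsCyclic G := isCyclic_of_surjective (Subgroup.topEquiv (G := G)) Subgroup.topEquiv.surjective
    exact concl_of_cyclic
  · rw [Fin.sum_univ_three] at hsum
    have hs : (H 0).index + (H 1).index + (H 2).index = Nat.card G + 2 := by omega
    have hg : ∀ g : G, g ≠ 1 → ∃ a : G, a * g * a⁻¹ ∈ H 0 ∨ a * g * a⁻¹ ∈ H 1 ∨ a * g * a⁻¹ ∈ H 2 := by
      intro g hg
      obtain ⟨i, a, h⟩ := hconj g hg
      refine ⟨a, ?_⟩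
      fin_cases i
      · exact Or.inl h
      · exact Or.inr (Or.inl h)
      · exact Or.inr (Or.inr h)
    have k0 := hcard 0
    have k1 := hcard 1
    have k2 := hcard 2
    have c0 := hcyc 0
    have c1 := hcyc 1
    have c2 := hcyc 2
    rcases le_total (Nat.card (H 0)) (Nat.card (H 1)) with h01 | h01 <;>
    rcases le_total (Nat.card (H 1)) (Nat.card (H 2)) with h12 | h12 <;>
    rcases le_total (Nat.card (H 0)) (Nat.card (H 2)) with h02 | h02
    · exact concl_three (H 0) (H 1) (H 2) hN2 k0 h01 h12 hg (by omega)
    · exact concl_three (H 0) (H 1) (H 2) hN2 k0 h01 h12 hg (by omega)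
    · exact concl_three (H 0) (H 2) (H 1) hN2 k0 h02 h12
        (fun g h => (hg g h).imp fun a ha => by tauto) (by omega)
    · exact concl_three (H 2) (H 0) (H 1) hN2 k2 h02 h01
        (fun g h => (hg g h).imp fun a ha => by tauto) (by omega)
    · exact concl_three (H 1) (H 0) (H 2) hN2 k1 h01 h02
        (fun g h => (hg g h).imp fun a ha => by tauto) (by omega)
    · exact concl_three (H 1) (H 2) (H 0) hN2 k1 h12 h02
        (fun g h => (hg g h).imp fun a ha => by tauto) (by omega)
    · exact concl_three (H 2) (H 1) (H 0) hN2 k2 h12 h01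
        (fun g h => (hg g h).imp fun a ha => by tauto) (by omega)
    · exact concl_three (H 2) (H 1) (H 0) hN2 k2 h12 h01
        (fun g h => (hg g h).imp fun a ha => by tauto) (by omega)

end PGLClass
namespace PGLClass

open Subgroup MulAction Matrix MatrixGroups Projectivization

theorem scalar_of_double {A : Matrix (Fin 2) (Fin 2) ℂ} {l c : ℂ} (hl : l ≠ 0)
    (ht : A 0 0 + A 1 1 = 2 * l) (hd : A 0 0 * A 1 1 - A 0 1 * A 1 0 = l ^ 2) {n : ℕ}
    (hA : A ^ (n + 1) = c • (1 : Matrix (Fin 2) (Fin 2) ℂ)) :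
    A = l • (1 : Matrix (Fin 2) (Fin 2) ℂ) := by
  have hsq : A * A = (2 * l) • A - (l ^ 2) • (1 : Matrix (Fin 2) (Fin 2) ℂ) := by
    ext i j
    fin_cases i <;> fin_cases j <;> simp [Matrix.mul_apply, Fin.sum_univ_two]
    · linear_combination (A 0 0) * ht - hd
    · linear_combination (A 0 1) * ht
    · linear_combination (A 1 0) * ht
    · linear_combination (A 1 1) * ht - hd
  have hpow : ∀ k : ℕ, A ^ (k + 1) = ((k + 1 : ℂ) * l ^ k) • A -
      ((k : ℂ) * l ^ (k + 1)) • (1 : Matrix (Fin 2) (Fin 2) ℂ) := by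
    intro k
    induction k with
    | zero => simp
    | succ k ih =>
      rw [pow_succ, ih, sub_mul, smul_mul_assoc, hsq, smul_mul_assoc, one_mul]
      ext i j
      simp only [Matrix.sub_apply, Matrix.smul_apply, smul_eq_mul]
      push_cast
      ring
  have h := hpow n
  rw [hA] at h
  have hne : ((n : ℂ) + 1) * l ^ n ≠ 0 :=
    mul_ne_zero (Nat.cast_add_one_ne_zero n) (pow_ne_zero _ hl)
  have h01 := congrFun (congrFun h 0) 1
  have h10 := congrFun (congrFun h 1) 0
  have h00 := congrFun (congrFun h 0) 0
  have h11 := congrFun (congrFun h 1) 1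
  simp at h01 h10 h00 h11
  have e01 : A 0 1 = 0 := by
    have : (((n : ℂ) + 1) * l ^ n) * A 0 1 = 0 := by simpa using h01
    exact (mul_eq_zero.mp this).resolve_left hne
  have e10 : A 1 0 = 0 := by
    have : (((n : ℂ) + 1) * l ^ n) * A 1 0 = 0 := by simpa using h10
    exact (mul_eq_zero.mp this).resolve_left hne
  have ed : A 0 0 = A 1 1 := by
    have : (((n : ℂ) + 1) * l ^ n) * (A 0 0 - A 1 1) = 0 := by linear_combination h11 - h00
    exact sub_eq_zero.mp ((mul_eq_zero.mp this).resolve_left hne)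
  have e0 : A 0 0 = l := by linear_combination (1 / 2) * ht + (1 / 2) * ed
  ext i j
  fin_cases i <;> fin_cases j <;> simp [e01, e10, e0, ← ed]

theorem mk_eq_one_of_scalar {A : GL (Fin 2) ℂ} {l : ℂ}
    (h : A.1 = l • (1 : Matrix (Fin 2) (Fin 2) ℂ)) : (ProjGenLinGroup.mk A : PGL(2, ℂ)) = 1 := by
  rw [ProjGenLinGroup.mk_eq_one, Subgroup.mem_center_iff]
  intro B
  apply Units.ext
  rw [Units.val_mul, Units.val_mul, h]
  simp

theorem scalar_of_mk_eq_one {A : GL (Fin 2) ℂ} (h : (ProjGenLinGroup.mk A : PGL(2, ℂ)) = 1) :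
    ∃ l : ℂ, A.1 = l • (1 : Matrix (Fin 2) (Fin 2) ℂ) := by
  rw [← ProjGenLinGroup.mk_one, eq_comm, ProjGenLinGroup.mk_eq_mk_iff] at h
  obtain ⟨u, hu⟩ := h
  refine ⟨u, ?_⟩
  rw [← hu]
  ext i j
  simp [Matrix.smul_apply, Matrix.one_apply, Matrix.diagonal_apply]

theorem fix_iff {A : GL (Fin 2) ℂ} {v : Fin 2 → ℂ} (hv : v ≠ 0) :
    (ProjGenLinGroup.mk A : PGL(2, ℂ)) • mk ℂ v hv = mk ℂ v hv ↔ ∃ l : ℂ, A.1 *ᵥ v = l • v := by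
  rw [PGL.mk_smul_mk, mk_eq_mk_iff']
  constructor
  · rintro ⟨l, hl⟩; exact ⟨l, hl.symm⟩
  · rintro ⟨l, hl⟩; exact ⟨l, hl.symm⟩

theorem char_root {A : Matrix (Fin 2) (Fin 2) ℂ} {v : Fin 2 → ℂ} (hv : v ≠ 0) {l : ℂ}
    (h : A *ᵥ v = l • v) :
    l ^ 2 - (A 0 0 + A 1 1) * l + (A 0 0 * A 1 1 - A 0 1 * A 1 0) = 0 := by
  have h0 := congrFun h 0
  have h1 := congrFun h 1
  simp [Matrix.mulVec, dotProduct, Fin.sum_univ_two] at h0 h1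
  by_contra hne
  apply hv
  have e0 : v 0 = 0 := by
    have : (l ^ 2 - (A 0 0 + A 1 1) * l + (A 0 0 * A 1 1 - A 0 1 * A 1 0)) * v 0 = 0 := by
      linear_combination (A 1 1 - l) * h0 - A 0 1 * h1
    exact (mul_eq_zero.mp this).resolve_left hne
  have e1 : v 1 = 0 := by
    have : (l ^ 2 - (A 0 0 + A 1 1) * l + (A 0 0 * A 1 1 - A 0 1 * A 1 0)) * v 1 = 0 := by
      linear_combination (A 0 0 - l) * h1 - A 1 0 * h0
    exact (mul_eq_zero.mp this).resolve_left hne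
  ext i
  fin_cases i
  · exact e0
  · exact e1

theorem mk_eq_of_cross {u v : Fin 2 → ℂ} (hu : u ≠ 0) (hv : v ≠ 0) (h : u 0 * v 1 = u 1 * v 0) :
    mk ℂ u hu = mk ℂ v hv := by
  rw [mk_eq_mk_iff']
  by_cases h0 : v 0 = 0
  · have h1 : v 1 ≠ 0 := by
      intro h1
      apply hv
      ext i
      fin_cases i
      · exact h0
      · exact h1
    refine ⟨u 1 / v 1, ?_⟩
    ext i
    fin_cases i
    · simp
      field_simp
      linear_combination -h
    · simp
      field_simp
  · refine ⟨u 0 / v 0, ?_⟩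
    ext i
    fin_cases i
    · simp
      field_simp
    · simp
      field_simp
      linear_combination h

theorem same_eigen {A : Matrix (Fin 2) (Fin 2) ℂ} {u v : Fin 2 → ℂ} (hu : u ≠ 0) (hv : v ≠ 0) {l : ℂ}
    (hA : A ≠ l • (1 : Matrix (Fin 2) (Fin 2) ℂ)) (h : A *ᵥ u = l • u) (h' : A *ᵥ v = l • v) :
    mk ℂ u hu = mk ℂ v hv := by
  apply mk_eq_of_cross
  by_contra hne
  have hD : u 0 * v 1 - u 1 * v 0 ≠ 0 := sub_ne_zero.mpr hne
  have h0 := congrFun h 0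
  have h1 := congrFun h 1
  have k0 := congrFun h' 0
  have k1 := congrFun h' 1
  simp [Matrix.mulVec, dotProduct, Fin.sum_univ_two] at h0 h1 k0 k1
  apply hA
  have e00 : A 0 0 = l := by
    have : (u 0 * v 1 - u 1 * v 0) * (A 0 0 - l) = 0 := by
      linear_combination v 1 * h0 - u 1 * k0
    exact sub_eq_zero.mp ((mul_eq_zero.mp this).resolve_left hD)
  have e01 : A 0 1 = 0 := by
    have : (u 0 * v 1 - u 1 * v 0) * (A 0 1) = 0 := by
      linear_combination u 0 * k0 - v 0 * h0
    exact (mul_eq_zero.mp this).resolve_left hD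
  have e10 : A 1 0 = 0 := by
    have : (u 0 * v 1 - u 1 * v 0) * (A 1 0) = 0 := by
      linear_combination v 1 * h1 - u 1 * k1
    exact (mul_eq_zero.mp this).resolve_left hD
  have e11 : A 1 1 = l := by
    have : (u 0 * v 1 - u 1 * v 0) * (A 1 1 - l) = 0 := by
      linear_combination u 0 * k1 - v 0 * h1
    exact sub_eq_zero.mp ((mul_eq_zero.mp this).resolve_left hD)
  ext i j
  fin_cases i <;> fin_cases j <;> simp [e00, e01, e10, e11]

theorem exists_eigen {A : Matrix (Fin 2) (Fin 2) ℂ} {l : ℂ}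
    (h : l ^ 2 - (A 0 0 + A 1 1) * l + (A 0 0 * A 1 1 - A 0 1 * A 1 0) = 0) :
    ∃ v : Fin 2 → ℂ, v ≠ 0 ∧ A *ᵥ v = l • v := by
  have hdet : (A - l • (1 : Matrix (Fin 2) (Fin 2) ℂ)).det = 0 := by
    rw [Matrix.det_fin_two]
    simp
    linear_combination h
  obtain ⟨v, hv, hv0⟩ := Matrix.exists_mulVec_eq_zero_iff.mpr hdet
  refine ⟨v, hv, ?_⟩
  rw [Matrix.sub_mulVec, Matrix.smul_mulVec, Matrix.one_mulVec] at hv0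
  exact sub_eq_zero.mp hv0

theorem det_ne {A : GL (Fin 2) ℂ} : A.1 0 0 * A.1 1 1 - A.1 0 1 * A.1 1 0 ≠ 0 := by
  rw [← Matrix.det_fin_two]
  exact (Matrix.isUnits_det_units A).ne_zero

/-- A lift of a nontrivial element of finite order has no repeated eigenvalue. -/
theorem no_double {A : GL (Fin 2) ℂ} (h1 : (ProjGenLinGroup.mk A : PGL(2, ℂ)) ≠ 1)
    (hf : IsOfFinOrder (ProjGenLinGroup.mk A : PGL(2, ℂ))) {l : ℂ}
    (ht : A.1 0 0 + A.1 1 1 = 2 * l) (hd : A.1 0 0 * A.1 1 1 - A.1 0 1 * A.1 1 0 = l ^ 2) : False := by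
  have hl : l ≠ 0 := by
    rintro rfl
    exact det_ne (A := A) (by rw [hd]; simp)
  obtain ⟨n, hn, hpow⟩ := isOfFinOrder_iff_pow_eq_one.mp hf
  rw [← map_pow] at hpow
  obtain ⟨c, hc⟩ := scalar_of_mk_eq_one hpow
  obtain ⟨m, rfl⟩ : ∃ m, n = m + 1 := ⟨n - 1, by omega⟩
  rw [Units.val_pow_eq_pow_val] at hc
  exact h1 (mk_eq_one_of_scalar (scalar_of_double hl ht hd hc))

theorem fixed_two {g : PGL(2, ℂ)} (h1 : g ≠ 1) (hf : IsOfFinOrder g) :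
    ({x : Projectivization ℂ (Fin 2 → ℂ) | g • x = x}).ncard = 2 := by
  obtain ⟨A, rfl⟩ := ProjGenLinGroup.mk_surjective g
  obtain ⟨s, hs⟩ := IsAlgClosed.exists_pow_nat_eq
    ((A.1 0 0 + A.1 1 1) ^ 2 - 4 * (A.1 0 0 * A.1 1 1 - A.1 0 1 * A.1 1 0)) (n := 2) (by norm_num)
  have hs0 : s ≠ 0 := by
    rintro rfl
    refine no_double h1 hf (l := (A.1 0 0 + A.1 1 1) / 2) (by ring) ?_
    linear_combination (1 / 4) * hs
  have hns : ∀ l : ℂ, A.1 ≠ l • (1 : Matrix (Fin 2) (Fin 2) ℂ) :=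
    fun l h => h1 (mk_eq_one_of_scalar h)
  obtain ⟨v, hv, hAv⟩ := exists_eigen (A := A.1) (l := (A.1 0 0 + A.1 1 1 + s) / 2)
    (by linear_combination (1 / 4) * hs)
  obtain ⟨w, hw, hAw⟩ := exists_eigen (A := A.1) (l := (A.1 0 0 + A.1 1 1 - s) / 2)
    (by linear_combination (1 / 4) * hs)
  rw [Set.ncard_eq_two]
  refine ⟨mk ℂ v hv, mk ℂ w hw, ?_, ?_⟩
  · intro h
    rw [mk_eq_mk_iff'] at h
    obtain ⟨a, ha⟩ := h
    have : A.1 *ᵥ v = ((A.1 0 0 + A.1 1 1 - s) / 2) • v := by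
      rw [← ha, Matrix.mulVec_smul, hAw, smul_comm]
    rw [hAv, ← sub_eq_zero, ← sub_smul] at this
    rcases smul_eq_zero.mp this with h | h
    · apply hs0; linear_combination h
    · exact hv h
  · ext x
    simp only [Set.mem_setOf_eq, Set.mem_insert_iff, Set.mem_singleton_iff]
    induction x using Projectivization.ind with | _ u hu =>
    rw [fix_iff]
    constructor
    · rintro ⟨l, hl⟩
      have hr := char_root hu hl
      have : (l - (A.1 0 0 + A.1 1 1 + s) / 2) * (l - (A.1 0 0 + A.1 1 1 - s) / 2) = 0 := by
        linear_combination hr - (1 / 4) * hs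
      rcases mul_eq_zero.mp this with h | h
      · left
        rw [sub_eq_zero.mp h] at hl
        exact same_eigen hu hv (hns _) hl hAv
      · right
        rw [sub_eq_zero.mp h] at hl
        exact same_eigen hu hw (hns _) hl hAw
    · rintro (h | h)
      · rw [← fix_iff hu, h, fix_iff]; exact ⟨_, hAv⟩
      · rw [← fix_iff hu, h, fix_iff]; exact ⟨_, hAw⟩

theorem stab_cyclic (G : Subgroup PGL(2, ℂ)) [Finite G] (x : Projectivization ℂ (Fin 2 → ℂ)) :
    IsCyclic (stabilizer G x) := by
  induction x using Projectivization.ind with | _ v hv =>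
  have key : ∀ g : stabilizer G (mk ℂ v hv), ∃ r : ℂ, ∀ (A : GL (Fin 2) ℂ) (l : ℂ),
      (ProjGenLinGroup.mk A : PGL(2, ℂ)) = g.1.1 → A.1 *ᵥ v = l • v → r * A.1.det = l ^ 2 := by
    intro g
    obtain ⟨A, hA⟩ := ProjGenLinGroup.mk_surjective g.1.1
    have hg : (ProjGenLinGroup.mk A : PGL(2, ℂ)) • mk ℂ v hv = mk ℂ v hv := by
      rw [hA]; exact g.2
    obtain ⟨l, hl⟩ := (fix_iff hv).mp hg
    have hd : A.1.det ≠ 0 := (Matrix.isUnits_det_units A).ne_zero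
    refine ⟨l ^ 2 / A.1.det, ?_⟩
    intro B m hB hm
    rw [← hA, eq_comm, ProjGenLinGroup.mk_eq_mk_iff] at hB
    obtain ⟨u, hu⟩ := hB
    have hBA : B.1 = (u : ℂ) • A.1 := by
      rw [← hu]
      ext i j
      simp [mul_comm]
    have hmu : m = u * l := by
      rw [hBA, Matrix.smul_mulVec, hl, smul_smul, ← sub_eq_zero, ← sub_smul] at hm
      rcases smul_eq_zero.mp hm with h | h
      · linear_combination -h
      · exact absurd h hv
    rw [hBA, Matrix.det_smul, hmu]
    simp
    field_simp
  choose f hf using key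
  have lift : ∀ g : stabilizer G (mk ℂ v hv), ∃ (A : GL (Fin 2) ℂ) (l : ℂ),
      (ProjGenLinGroup.mk A : PGL(2, ℂ)) = g.1.1 ∧ A.1 *ᵥ v = l • v := by
    intro g
    obtain ⟨A, hA⟩ := ProjGenLinGroup.mk_surjective g.1.1
    have hg : (ProjGenLinGroup.mk A : PGL(2, ℂ)) • mk ℂ v hv = mk ℂ v hv := by
      rw [hA]; exact g.2
    obtain ⟨l, hl⟩ := (fix_iff hv).mp hg
    exact ⟨A, l, hA, hl⟩
  have f1 : f 1 = 1 := by
    have := hf 1 1 1 rfl (by simp)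
    simpa using this
  have fmul : ∀ g h, f (g * h) = f g * f h := by
    intro g h
    obtain ⟨A, l, hA, hl⟩ := lift g
    obtain ⟨B, m, hB, hm⟩ := lift h
    have e1 := hf g A l hA hl
    have e2 := hf h B m hB hm
    have e3 := hf (g * h) (A * B) (l * m) (by rw [map_mul, hA, hB]; rfl) (by
      rw [Units.val_mul, ← Matrix.mulVec_mulVec, hm, Matrix.mulVec_smul, hl, smul_smul, mul_comm])
    rw [Units.val_mul, Matrix.det_mul] at e3
    have hdA : A.1.det ≠ 0 := (Matrix.isUnits_det_units A).ne_zero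
    have hdB : B.1.det ≠ 0 := (Matrix.isUnits_det_units B).ne_zero
    apply mul_right_cancel₀ (mul_ne_zero hdA hdB)
    rw [e3, mul_pow, ← e1, ← e2]
    ring
  let F : stabilizer G (mk ℂ v hv) →* ℂ := ⟨⟨f, f1⟩, fmul⟩
  refine isCyclic_of_subgroup_isDomain F ?_
  have hker : ∀ g, f g = 1 → g = 1 := by
    intro g hg
    by_contra hne
    obtain ⟨A, l, hA, hl⟩ := lift g
    have e1 := hf g A l hA hl
    rw [hg, one_mul, Matrix.det_fin_two] at e1
    have hr := char_root hv hl
    have hl0 : l ≠ 0 := by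
      rintro rfl
      exact det_ne (A := A) (by rw [e1]; simp)
    have hfin : IsOfFinOrder (g.1.1 : PGL(2, ℂ)) := by
      have := isOfFinOrder_of_finite g.1
      exact MonoidHom.isOfFinOrder G.subtype this
    refine no_double (A := A) (l := l) ?_ (hA ▸ hfin) ?_ e1
    · rw [hA]
      intro h
      exact hne (Subtype.ext (Subtype.ext h))
    · apply mul_right_cancel₀ hl0
      linear_combination e1 - hr
  intro g h hgh
  have hgh' : f g = f h := hgh
  have : f (g * h⁻¹) = 1 := by
    rw [fmul, hgh', ← fmul, mul_inv_cancel, f1]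
  exact mul_inv_eq_one.mp (hker _ this)

theorem classification (G : Subgroup PGL(2, ℂ)) (hG : Finite G) : Concl G := by
  refine concl_of_action (X := Projectivization ℂ (Fin 2 → ℂ)) ?_ (stab_cyclic G)
  intro g hg
  refine fixed_two (g := g.1) (fun h => hg (Subtype.ext h)) ?_
  exact MonoidHom.isOfFinOrder G.subtype (isOfFinOrder_of_finite g)

end PGLClass


/-- Classification of finite subgroups of `PGL(2, ℂ) = GL(2, ℂ)/Z` (the automorphism group
of the Riemann sphere): every finite subgroup is isomorphic to a cyclic group `ℤ/nℤ`
(`n ≥ 1`), a dihedral group of order `2n` (`n ≥ 2`), `A₄`, `S₄`, or `A₅`. -/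
theorem finite_subgroup_pgl2_classification
    (G : Subgroup ((GL (Fin 2) ℂ) ⧸ Subgroup.center (GL (Fin 2) ℂ))) (hG : Finite G) :
    (∃ n : ℕ, 1 ≤ n ∧ Nonempty (G ≃* Multiplicative (ZMod n))) ∨
    (∃ n : ℕ, 2 ≤ n ∧ Nonempty (G ≃* DihedralGroup n)) ∨
    Nonempty (G ≃* alternatingGroup (Fin 4)) ∨
    Nonempty (G ≃* Equiv.Perm (Fin 4)) ∨
    Nonempty (G ≃* alternatingGroup (Fin 5)) := by
  exact PGLClass.classification G hG
end
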